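/- arXiv:1601.03577 — 2 statements merged into one kernel-verified Lean document; each statement's English description precedes it below -/
import Mathlib

section
/- For every C ≥ 0 and every ε > 0 there exists η > 0 such that for all x, y ∈ [0,s] with |x − y| < η, all v ∈ ℝ with |v| ≤ C, and all w ∈ ℝ, one has L(y,w) ≥ L(x,v) + ∂_v L(x,v)·(w − v) − ε. -/
/-!
The difference `L(x,v ± 1) - L(x,v) ∓ ∂_v L(x,v)` dominates the second difference
`L(x,v ± 1) + L(x,v) - 2 L(x,v ± 1/2)`, because the tangent line at `v` lies below the graph at
`v ± 1/2`. This second difference is positive by strict convexity and continuous in `(x,v)`, hence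
bounded below by some `δ > 0` for `|v| ≤ C`. Let `η` be given by uniform continuity of `L` on
`[0,s] × [-C-1,C+1]` for the tolerance `min ε (δ/2)`. If `|w - v| ≤ 1`, the bound is the tangent
inequality for `L(x,·)` together with `|L(x,w) - L(y,w)| < ε`. If `|w - v| ≥ 1`, the unit
difference quotient of `L(y,·)` at `v` towards `w` still beats `∂_v L(x,v)`, since the margin `δ`
absorbs both perturbations, and convexity of `L(y,·)` propagates this from `v ± 1` to `w`.
-/

theorem ConvexOn.tangent_le {f : ℝ → ℝ} (hf : ConvexOn ℝ Set.univ f) {a : ℝ}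
    (hd : DifferentiableAt ℝ f a) (b : ℝ) : f a + deriv f a * (b - a) ≤ f b := by
  rcases lt_trichotomy a b with h | h | h
  · have := hf.le_slope_of_hasDerivAt (Set.mem_univ a) (Set.mem_univ b) h hd.hasDerivAt
    rw [slope_def_field, le_div_iff₀ (by linarith)] at this
    linarith
  · subst h; simp
  · have := hf.slope_le_of_hasDerivAt (Set.mem_univ b) (Set.mem_univ a) h hd.hasDerivAt
    rw [slope_def_field, div_le_iff₀ (by linarith)] at this
    linarith

/-- A chord of a convex function, prolonged beyond its endpoint `a + e`, lies below the graph. -/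
theorem ConvexOn.chord_extend_le {f : ℝ → ℝ} (hf : ConvexOn ℝ Set.univ f) (a e : ℝ) {d : ℝ}
    (hd : 1 ≤ d) : f a + d * (f (a + e) - f a) ≤ f (a + d * e) := by
  have hd0 : 0 < d := by linarith
  have h1 : 1 / d ≤ 1 := by rw [div_le_one hd0]; exact hd
  have h := hf.2 (Set.mem_univ a) (Set.mem_univ (a + d * e))
    (by linarith : 0 ≤ 1 - 1 / d) (by positivity : 0 ≤ 1 / d) (by ring)
  have e1 : (1 - 1 / d) • a + (1 / d) • (a + d * e) = a + e := by
    simp only [smul_eq_mul]; field_simp; ring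
  rw [e1] at h
  simp only [smul_eq_mul] at h
  have h2 := mul_le_mul_of_nonneg_left h hd0.le
  have e2 : d * ((1 - 1 / d) * f a + 1 / d * f (a + d * e)) = (d - 1) * f a + f (a + d * e) := by
    field_simp
  rw [e2] at h2
  linarith

/-- Uniform positivity of the second difference of step `e / 2`, for base points in a compact
set. -/
theorem exists_second_difference_lower_bound {s : ℝ} {L : ℝ → ℝ → ℝ}
    (hL : ContinuousOn (fun p : ℝ × ℝ => L p.1 p.2) (Set.Icc 0 s ×ˢ (Set.univ : Set ℝ)))
    (hconv : ∀ x ∈ Set.Icc (0:ℝ) s, StrictConvexOn ℝ (Set.univ : Set ℝ) (L x))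
    (C : ℝ) {e : ℝ} (he : e ≠ 0) :
    ∃ δ : ℝ, 0 < δ ∧ ∀ x ∈ Set.Icc (0:ℝ) s, ∀ v ∈ Set.Icc (-C) C,
      δ ≤ L x (v + e) + L x v - 2 * L x (v + e / 2) := by
  have hshift : ∀ c : ℝ, ContinuousOn (fun p : ℝ × ℝ => L p.1 (p.2 + c))
      (Set.Icc 0 s ×ˢ Set.Icc (-C) C) := fun c =>
    hL.comp (f := fun p : ℝ × ℝ => (p.1, p.2 + c)) (by fun_prop) (fun p hp => ⟨hp.1, trivial⟩)
  have hcont : ContinuousOn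
      (fun p : ℝ × ℝ => L p.1 (p.2 + e) + L p.1 p.2 - 2 * L p.1 (p.2 + e / 2))
      (Set.Icc 0 s ×ˢ Set.Icc (-C) C) := by
    have h0 := hshift 0
    simp only [add_zero] at h0
    exact ((hshift e).add h0).sub (continuousOn_const.mul (hshift (e / 2)))
  obtain ⟨δ, hδ, h⟩ := (isCompact_Icc.prod isCompact_Icc).exists_forall_le' hcont (a := 0) (by
    rintro ⟨x, v⟩ ⟨hx, -⟩
    have h := (hconv x hx).2 (Set.mem_univ v) (Set.mem_univ (v + e)) (by simpa using he)
      (by norm_num : (0 : ℝ) < 1 / 2) (by norm_num : (0 : ℝ) < 1 / 2) (by norm_num)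
    have e1 : (1 / 2 : ℝ) • v + (1 / 2 : ℝ) • (v + e) = v + e / 2 := by
      simp only [smul_eq_mul]; ring
    rw [e1] at h
    simp only [smul_eq_mul] at h
    dsimp only
    linarith)
  exact ⟨δ, hδ, fun x hx v hv => h (x, v) ⟨hx, hv⟩⟩

/-- a uniform convexity-type lower bound for a Tonelli Lagrangian on an
interval: for `C ≥ 0`, `ε > 0` there is `η > 0` such that for `x, y` at distance `< η`,
`|v| ≤ C` and arbitrary `w`, `L(y,w) ≥ L(x,v) + ∂_v L(x,v)(w - v) - ε`. -/
theorem tonelli_uniform_subgradient_bound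
    (s : ℝ) (hs : 0 < s) (L : ℝ → ℝ → ℝ)
    (hC2 : ContDiffOn ℝ 2 (fun p : ℝ × ℝ => L p.1 p.2) (Set.Icc 0 s ×ˢ (Set.univ : Set ℝ)))
    (hconv : ∀ x ∈ Set.Icc (0:ℝ) s, StrictConvexOn ℝ (Set.univ : Set ℝ) (L x))
    (hsuper : ∀ x ∈ Set.Icc (0:ℝ) s, ∀ C : ℝ, ∃ D : ℝ, ∀ v : ℝ, C * |v| - D ≤ L x v) :
    ∀ C : ℝ, 0 ≤ C → ∀ ε : ℝ, 0 < ε → ∃ η : ℝ, 0 < η ∧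
      ∀ x ∈ Set.Icc (0:ℝ) s, ∀ y ∈ Set.Icc (0:ℝ) s, |x - y| < η →
      ∀ v w : ℝ, |v| ≤ C →
        L x v + deriv (fun z => L x z) v * (w - v) - ε ≤ L y w := by
  intro C hC ε hε
  have hL := hC2.continuousOn
  have hdiff : ∀ x ∈ Set.Icc (0:ℝ) s, ∀ v, DifferentiableAt ℝ (L x) v := by
    intro x hx v
    have h : ContDiffOn ℝ 2 (fun z : ℝ => L x z) Set.univ :=
      hC2.comp (f := fun z : ℝ => (x, z)) (by fun_prop) (fun z _ => ⟨hx, trivial⟩)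
    exact (contDiffOn_univ.1 h).differentiable (by norm_num) v
  obtain ⟨δ₁, hδ₁, H₁⟩ := exists_second_difference_lower_bound hL hconv C (e := 1) (by norm_num)
  obtain ⟨δ₂, hδ₂, H₂⟩ := exists_second_difference_lower_bound hL hconv C (e := -1) (by norm_num)
  obtain ⟨r, hr, hrε, hr₁, hr₂⟩ : ∃ r : ℝ, 0 < r ∧ r ≤ ε ∧ 2 * r ≤ δ₁ ∧ 2 * r ≤ δ₂ := by
    refine ⟨min ε (min (δ₁ / 2) (δ₂ / 2)), by positivity, min_le_left _ _, ?_, ?_⟩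
    · have := (min_le_right ε (min (δ₁ / 2) (δ₂ / 2))).trans (min_le_left _ _)
      linarith
    · have := (min_le_right ε (min (δ₁ / 2) (δ₂ / 2))).trans (min_le_right _ _)
      linarith
  have huc := (isCompact_Icc.prod isCompact_Icc).uniformContinuousOn_of_continuous
    (hL.mono (Set.prod_mono subset_rfl (Set.subset_univ (Set.Icc (-(C + 1)) (C + 1)))))
  obtain ⟨η, hη, hunif⟩ := Metric.uniformContinuousOn_iff.1 huc r hr
  refine ⟨η, hη, fun x hx y hy hxy v w hv => ?_⟩
  have hclose : ∀ z ∈ Set.Icc (-(C + 1)) (C + 1), |L x z - L y z| < r := by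
    intro z hz
    have h := hunif (x, z) ⟨hx, hz⟩ (y, z) ⟨hy, hz⟩ (by
      simpa [Prod.dist_eq, Real.dist_eq] using hxy)
    simpa [Real.dist_eq] using h
  have hvI : v ∈ Set.Icc (-C) C := abs_le.1 hv
  have htan := (hconv x hx).convexOn.tangent_le (hdiff x hx v)
  -- Applied below with `e = ± 1` the direction from `v` to `w` and `d = |w - v|`.
  have hfar : ∀ e d δ : ℝ, |e| ≤ 1 → 1 ≤ d → 2 * r ≤ δ →
      δ ≤ L x (v + e) + L x v - 2 * L x (v + e / 2) →
      L x v + deriv (L x) v * (d * e) - ε ≤ L y (v + d * e) := by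
    intro e d δ he hd hrδ hδ
    have he := abs_le.1 he
    have h0 := abs_lt.1 (hclose v ⟨by linarith [hvI.1], by linarith [hvI.2]⟩)
    have h1 := abs_lt.1 (hclose (v + e) ⟨by linarith [hvI.1], by linarith [hvI.2]⟩)
    have ht := htan (v + e / 2)
    have hext := (hconv y hy).convexOn.chord_extend_le v e hd
    have hslope : deriv (L x) v * e ≤ L y (v + e) - L y v := by linarith
    have := mul_le_mul_of_nonneg_left hslope (by linarith : 0 ≤ d)
    linarith
  change L x v + deriv (L x) v * (w - v) - ε ≤ L y w
  rcases le_total 1 (w - v) with h | h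
  · have := hfar 1 (w - v) δ₁ (by norm_num) h hr₁ (H₁ x hx v hvI)
    simpa using this
  rcases le_total 1 (v - w) with h' | h'
  · have := hfar (-1) (v - w) δ₂ (by norm_num) h' hr₂ (H₂ x hx v hvI)
    simpa using this
  · have h0 := abs_lt.1 (hclose w ⟨by linarith [hvI.1], by linarith [hvI.2]⟩)
    have := htan w
    linarith
end

section
/- Let L be a Tonelli Lagrangian on a metric graph G. For every ε > 0 there exists a constant K_ε such that every action minimizer γ : [a,b] → G with b − a ≥ ε is Lipschitz with Lipschitz constant K_ε. -/
/-!
The proof compares a minimizer with two kinds of competitors.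

Any two points of the graph can be joined in time `b - a ≥ ε` at speed at most `R / ε`, with `R`
depending only on the graph, because it is connected and has finitely many edges
(`exists_competitor`). By superlinearity, a curve that is fast almost everywhere has larger action
than this competitor, so there is `M` such that every minimizer has speed at most `M` on a set of
times of positive measure (`exists_slow_bound`).

Convexity and superlinearity also show that `2 L(x, v / 2) - L(x, v)` tends to `-∞` as `|v| → ∞`,
uniformly in `x` (`exists_slowdown_gain`). Suppose that a minimizer has speed above a large `K` on a
set of positive measure. Choose a fast set of measure `m` and a slow set of measure `2 m`, and run
the curve at half speed on the first and at double speed on the second; the total duration and the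
endpoints do not change. The resulting curve is admissible, its action is computed by a change of
variables (`exists_reparam`), and the gain on the fast set beats the bounded cost on the slow set.
This contradiction bounds the edge velocity almost everywhere (`exists_speed_bound`).

It remains to pass from a bound `K` on the edge velocity to a Lipschitz bound for the distance
(`AbsContOn.lipschitzOnWith`). The function `t ↦ dist (γ t) (γ s)` is absolutely continuous, so it
suffices to bound its derivative by `K` almost everywhere. At vertex times the function takes values
in a finite set, so its derivative vanishes almost everywhere there
(`ae_deriv_eq_zero_of_mem_null`). At the other times some care is needed: the edge parametrizations
`σ j` are only assumed to be 1-Lipschitz, so the edge coordinate of an absolutely continuous curve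
need not be absolutely continuous. However, near an interior point of an edge the distance to a
suitable point is an isometric coordinate, and the edge coordinate is a monotone function of it
(`exists_local_chart`). As monotone functions are differentiable almost everywhere, the curve has
almost everywhere either an edge velocity or metric speed `0` (`AbsContOn.ae_hasGDerivAt`).
-/

open Filter Set

/-- A compact metric graph: finitely many edges parametrized by arc length,
whose distance is the minimal length of unit-speed paths. -/
structure MetricGraph where
  G : Type
  [ms : MetricSpace G]
  [cs : CompactSpace G]
  E : Type
  [fE : Fintype E]
  [neE : Nonempty E]
  len : E → ℝ
  len_pos : ∀ j, 0 < len j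
  σ : E → ℝ → G
  σ_lip : ∀ j, ∀ s ∈ Set.Icc (0:ℝ) (len j), ∀ t ∈ Set.Icc (0:ℝ) (len j),
    dist (σ j s) (σ j t) ≤ |s - t|
  σ_inj : ∀ j, Set.InjOn (σ j) (Set.Icc 0 (len j))
  cover : ∀ x : G, ∃ j, ∃ s ∈ Set.Icc (0:ℝ) (len j), σ j s = x
  interiors_disjoint : ∀ i j, ∀ s ∈ Set.Ioo (0:ℝ) (len i), ∀ t ∈ Set.Ioo (0:ℝ) (len j),
    σ i s = σ j t → i = j
  path_dist : ∀ x y : G, dist x y =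
    sInf {T : ℝ | 0 ≤ T ∧ ∃ γ : ℝ → G, γ 0 = x ∧ γ T = y ∧ LipschitzOnWith 1 γ (Set.Icc 0 T)}
  path_exists : ∀ x y : G, ∃ T : ℝ, 0 ≤ T ∧ ∃ γ : ℝ → G, γ 0 = x ∧ γ T = y ∧
    LipschitzOnWith 1 γ (Set.Icc 0 T)

attribute [instance] MetricGraph.ms MetricGraph.cs MetricGraph.fE MetricGraph.neE

open MeasureTheory

namespace MetricGraph

/-- The vertex set: endpoints of edges. -/
def vertexSet (Γ : MetricGraph) : Set Γ.G :=
  {x | ∃ j, x = Γ.σ j 0 ∨ x = Γ.σ j (Γ.len j)}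

/-- The curve `γ` has (edgewise) derivative `v` at time `t`: either `γ t` is a vertex,
`v = 0` and `d(γ s, γ t) = o(|s-t|)`, or `γ t` lies in the interior of an edge and `v`
is the derivative of the edge coordinate of `γ` at `t`. -/
def HasGDerivAt (Γ : MetricGraph) (γ : ℝ → Γ.G) (t v : ℝ) : Prop :=
  (γ t ∈ Γ.vertexSet ∧ v = 0 ∧
    ∀ ε : ℝ, 0 < ε → ∃ δ : ℝ, 0 < δ ∧ ∀ s : ℝ, |s - t| < δ → dist (γ s) (γ t) ≤ ε * |s - t|) ∨
  (γ t ∉ Γ.vertexSet ∧ ∃ j : Γ.E, ∃ f : ℝ → ℝ,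
    (∀ᶠ s in nhds t, Γ.σ j (f s) = γ s) ∧ (∀ᶠ s in nhds t, f s ∈ Set.Icc 0 (Γ.len j)) ∧
    HasDerivAt f v t)

/-- The (edgewise) derivative of a curve, defined by choice where it exists, `0` elsewhere. -/
noncomputable def gderiv (Γ : MetricGraph) (γ : ℝ → Γ.G) (t : ℝ) : ℝ :=
  letI := Classical.dec (∃ v, Γ.HasGDerivAt γ t v)
  if h : ∃ v, Γ.HasGDerivAt γ t v then h.choose else 0

/-- Absolute continuity of a curve `γ : [a,b] → G`. -/
def AbsContOn (Γ : MetricGraph) (a b : ℝ) (γ : ℝ → Γ.G) : Prop :=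
  ∀ ε : ℝ, 0 < ε → ∃ δ : ℝ, 0 < δ ∧ ∀ n : ℕ, ∀ c d : Fin n → ℝ,
    (∀ i, c i ∈ Set.Icc a b ∧ d i ∈ Set.Icc a b ∧ c i ≤ d i) →
    ((Set.univ : Set (Fin n)).PairwiseDisjoint fun i => Set.Ioo (c i) (d i)) →
    (∑ i, (d i - c i)) < δ →
    (∑ i, dist (γ (c i)) (γ (d i))) < ε

/-- A function on `G` is `C¹` near a vertex `e` if its pullback to every edge
containing `e` is `C¹` near the coordinate of `e`. -/
def C1AtVertex (Γ : MetricGraph) (ψ : Γ.G → ℝ) (e : Γ.G) : Prop :=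
  ∀ j, ∀ s ∈ Set.Icc (0:ℝ) (Γ.len j), Γ.σ j s = e →
    ∃ δ : ℝ, 0 < δ ∧ ContDiffOn ℝ 1 (fun τ => ψ (Γ.σ j τ))
      (Set.Icc 0 (Γ.len j) ∩ Set.Ioo (s - δ) (s + δ))

/-- A function on `G × ℝ` is `C¹` near `(e, t)` with `e` a vertex. -/
def C1AtVertexT (Γ : MetricGraph) (ψ : Γ.G → ℝ → ℝ) (e : Γ.G) (t : ℝ) : Prop :=
  ∀ j, ∀ s ∈ Set.Icc (0:ℝ) (Γ.len j), Γ.σ j s = e →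
    ∃ δ : ℝ, 0 < δ ∧ ContDiffOn ℝ 1 (fun q : ℝ × ℝ => ψ (Γ.σ j q.1) q.2)
      ((Set.Icc 0 (Γ.len j) ∩ Set.Ioo (s - δ) (s + δ)) ×ˢ Set.Ioo (t - δ) (t + δ))

end MetricGraph

/-- A Tonelli Lagrangian on a metric graph: edgewise `C²`, strictly convex and
superlinear in the velocity, consistent at the vertices. -/
structure TonelliLagrangian (Γ : MetricGraph) where
  L : Γ.E → ℝ → ℝ → ℝ
  smooth : ∀ j, ContDiffOn ℝ 2 (fun p : ℝ × ℝ => L j p.1 p.2)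
    (Set.Icc 0 (Γ.len j) ×ˢ (Set.univ : Set ℝ))
  strictconv : ∀ j, ∀ x ∈ Set.Icc (0:ℝ) (Γ.len j), StrictConvexOn ℝ (Set.univ : Set ℝ) (L j x)
  superlinear : ∀ j, ∀ x ∈ Set.Icc (0:ℝ) (Γ.len j), ∀ C : ℝ, ∃ D : ℝ, ∀ v : ℝ,
    C * |v| - D ≤ L j x v
  vertex_consistent : ∀ i j, ∀ s ∈ Set.Icc (0:ℝ) (Γ.len i), ∀ t ∈ Set.Icc (0:ℝ) (Γ.len j),
    Γ.σ i s = Γ.σ j t → L i s 0 = L j t 0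

namespace TonelliLagrangian

variable {Γ : MetricGraph}

/-- The value of the Lagrangian at a point of `G` (via a choice of edge containing it). -/
noncomputable def lagOf (Λ : TonelliLagrangian Γ) (x : Γ.G) (v : ℝ) : ℝ :=
  Λ.L (Γ.cover x).choose (Γ.cover x).choose_spec.choose v

/-- The velocity partial derivative `∂_v L` at a point of `G`. -/
noncomputable def lagVOf (Λ : TonelliLagrangian Γ) (x : Γ.G) (v : ℝ) : ℝ :=
  deriv (fun w => Λ.L (Γ.cover x).choose (Γ.cover x).choose_spec.choose w) v

/-- The action of a curve `γ : [a,b] → G`. -/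
noncomputable def action (Λ : TonelliLagrangian Γ) (a b : ℝ) (γ : ℝ → Γ.G) : ℝ :=
  ∫ t in a..b, Λ.lagOf (γ t) (Γ.gderiv γ t)

/-- The integrand of the action is integrable (i.e. the action is finite). -/
def ActionIntegrableOn (Λ : TonelliLagrangian Γ) (a b : ℝ) (γ : ℝ → Γ.G) : Prop :=
  IntegrableOn (fun t => Λ.lagOf (γ t) (Γ.gderiv γ t)) (Set.Icc a b)

/-- An action minimizer with fixed endpoints. -/
def Minimizer (Λ : TonelliLagrangian Γ) (a b : ℝ) (γ : ℝ → Γ.G) : Prop :=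
  Γ.AbsContOn a b γ ∧ Λ.ActionIntegrableOn a b γ ∧
  ∀ α : ℝ → Γ.G, Γ.AbsContOn a b α → Λ.ActionIntegrableOn a b α →
    α a = γ a → α b = γ b → Λ.action a b γ ≤ Λ.action a b α

/-- `h_t(x,y)`: minimal action among absolutely continuous curves from `x` to `y` in time `t`. -/
noncomputable def ht (Λ : TonelliLagrangian Γ) (t : ℝ) (x y : Γ.G) : ℝ :=
  sInf {r | ∃ γ : ℝ → Γ.G, Γ.AbsContOn 0 t γ ∧ γ 0 = x ∧ γ t = y ∧
    Λ.ActionIntegrableOn 0 t γ ∧ r = Λ.action 0 t γ}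

/-- `c` is the critical value of the Lagrangian. -/
def IsCriticalValue (Λ : TonelliLagrangian Γ) (c : ℝ) : Prop :=
  (∀ k : ℝ, c < k → ∀ x y : Γ.G,
    Filter.liminf (fun t : ℝ => ((Λ.ht t x y + k * t : ℝ) : EReal)) Filter.atTop = ⊤) ∧
  (∀ k : ℝ, k < c → ∀ x y : Γ.G,
    Filter.liminf (fun t : ℝ => ((Λ.ht t x y + k * t : ℝ) : EReal)) Filter.atTop = ⊥) ∧
  (∀ x y : Γ.G, ∃ r : ℝ,
    Filter.liminf (fun t : ℝ => ((Λ.ht t x y + c * t : ℝ) : EReal)) Filter.atTop = (r : EReal))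

/-- The Peierls barrier `h(x,y) = liminf_{t→∞} (h_t(x,y) + ct)`. -/
noncomputable def peierls (Λ : TonelliLagrangian Γ) (c : ℝ) (x y : Γ.G) : ℝ :=
  (Filter.liminf (fun t : ℝ => ((Λ.ht t x y + c * t : ℝ) : EReal)) Filter.atTop).toReal

/-- The Mañé potential `Φ(x,y) = inf_{t>0} (h_t(x,y) + ct)`. -/
noncomputable def mane (Λ : TonelliLagrangian Γ) (c : ℝ) (x y : Γ.G) : ℝ :=
  sInf {r | ∃ t : ℝ, 0 < t ∧ r = Λ.ht t x y + c * t}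

/-- The Aubry set: points with `h(x,x) = 0`. -/
def aubrySet (Λ : TonelliLagrangian Γ) (c : ℝ) : Set Γ.G :=
  {x | Λ.peierls c x x = 0}

/-- A dominated function: `u(y) - u(x) ≤ h_t(x,y) + ct`. -/
def Dominated (Λ : TonelliLagrangian Γ) (c : ℝ) (u : Γ.G → ℝ) : Prop :=
  ∀ x y : Γ.G, ∀ t : ℝ, 0 < t → u y - u x ≤ Λ.ht t x y + c * t

/-- The curve `γ` calibrates the function `u` on the time interval `J`. -/
def Calibrates (Λ : TonelliLagrangian Γ) (c : ℝ) (J : Set ℝ) (γ : ℝ → Γ.G)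
    (u : Γ.G → ℝ) : Prop :=
  ∀ t ∈ J, ∀ s ∈ J, t ≤ s → Λ.ActionIntegrableOn t s γ ∧
    u (γ s) - u (γ t) = Λ.action t s γ + c * (s - t)

/-- Backward weak KAM solution. -/
def BackwardWeakKAM (Λ : TonelliLagrangian Γ) (c : ℝ) (u : Γ.G → ℝ) : Prop :=
  Continuous u ∧ Λ.Dominated c u ∧
  ∀ x : Γ.G, ∃ γ : ℝ → Γ.G, γ 0 = x ∧ (∀ a : ℝ, a ≤ 0 → Γ.AbsContOn a 0 γ) ∧
    Λ.Calibrates c (Set.Iic 0) γ u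

/-- Forward weak KAM solution. -/
def ForwardWeakKAM (Λ : TonelliLagrangian Γ) (c : ℝ) (u : Γ.G → ℝ) : Prop :=
  Continuous u ∧ Λ.Dominated c u ∧
  ∀ x : Γ.G, ∃ γ : ℝ → Γ.G, γ 0 = x ∧ (∀ b : ℝ, 0 ≤ b → Γ.AbsContOn 0 b γ) ∧
    Λ.Calibrates c (Set.Ici 0) γ u

/-- Semi-static curve on a time interval `J`. -/
def SemiStatic (Λ : TonelliLagrangian Γ) (c : ℝ) (J : Set ℝ) (η : ℝ → Γ.G) : Prop :=
  ∀ t ∈ J, ∀ s ∈ J, t ≤ s → Λ.ActionIntegrableOn t s η ∧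
    Λ.mane c (η t) (η s) = Λ.action t s η + c * (s - t)

/-- The Lax–Oleinik semigroup `(ℒ_t f)(x) = inf_y (f(y) + h_t(y,x))`. -/
noncomputable def lax (Λ : TonelliLagrangian Γ) (t : ℝ) (f : Γ.G → ℝ) (x : Γ.G) : ℝ :=
  ⨅ y : Γ.G, (f y + Λ.ht t y x)

/-- The Lagrangian is symmetric at the vertices. -/
def SymmetricAtVertices (Λ : TonelliLagrangian Γ) : Prop :=
  ∀ e ∈ Γ.vertexSet, ∃ lam : ℝ → ℝ, ∀ j, ∀ s ∈ Set.Icc (0:ℝ) (Γ.len j),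
    Γ.σ j s = e → ∀ z : ℝ, Λ.L j s z = lam |z|

/-- The Hamiltonian `H_j(x,p)`, where at the endpoints of the edge only
incoming-or-zero velocities are used. -/
noncomputable def ham (Λ : TonelliLagrangian Γ) (j : Γ.E) (x p : ℝ) : ℝ :=
  sSup {r | ∃ z : ℝ, ((x = 0 → 0 ≤ z) ∧ (x = Γ.len j → z ≤ 0)) ∧ r = -p * z - Λ.L j x z}

/-- Viscosity subsolution of `H(x, Du) = c` on the graph. -/
def ViscositySubsolution (Λ : TonelliLagrangian Γ) (c : ℝ) (u : Γ.G → ℝ) : Prop :=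
  Continuous u ∧
  (∀ j : Γ.E, ∀ s ∈ Set.Ioo (0:ℝ) (Γ.len j), Γ.σ j s ∉ Γ.vertexSet →
    ∀ (φ : ℝ → ℝ) (p : ℝ), HasDerivAt φ p s →
      IsLocalMax (fun τ => u (Γ.σ j τ) - φ τ) s → Λ.ham j s p ≤ c) ∧
  (∀ e ∈ Γ.vertexSet, ∀ ψ : Γ.G → ℝ, MetricGraph.C1AtVertex Γ ψ e →
    (∃ ε : ℝ, 0 < ε ∧ ∀ x : Γ.G, dist x e < ε → u x - ψ x ≤ u e - ψ e) →
    ∀ j : Γ.E, ∀ s ∈ Set.Icc (0:ℝ) (Γ.len j), Γ.σ j s = e →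
    ∀ p : ℝ, HasDerivWithinAt (fun τ => ψ (Γ.σ j τ)) p (Set.Icc 0 (Γ.len j)) s →
      Λ.ham j s p ≤ c)

/-- Viscosity supersolution of `H(x, Du) = c` on the graph. -/
def ViscositySupersolution (Λ : TonelliLagrangian Γ) (c : ℝ) (u : Γ.G → ℝ) : Prop :=
  Continuous u ∧
  (∀ j : Γ.E, ∀ s ∈ Set.Ioo (0:ℝ) (Γ.len j), Γ.σ j s ∉ Γ.vertexSet →
    ∀ (φ : ℝ → ℝ) (p : ℝ), HasDerivAt φ p s →
      IsLocalMin (fun τ => u (Γ.σ j τ) - φ τ) s → c ≤ Λ.ham j s p) ∧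
  (∀ e ∈ Γ.vertexSet, ∀ ψ : Γ.G → ℝ, MetricGraph.C1AtVertex Γ ψ e →
    (∃ ε : ℝ, 0 < ε ∧ ∀ x : Γ.G, dist x e < ε → u e - ψ e ≤ u x - ψ x) →
    ∃ j : Γ.E, ∃ s ∈ Set.Icc (0:ℝ) (Γ.len j), Γ.σ j s = e ∧
      ∃ p : ℝ, HasDerivWithinAt (fun τ => ψ (Γ.σ j τ)) p (Set.Icc 0 (Γ.len j)) s ∧
      c ≤ Λ.ham j s p)

/-- Viscosity subsolution of `u_t + H(x, D_x u) = 0` on `G × (0,T]`. -/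
def EvoSubsolution (Λ : TonelliLagrangian Γ) (T : ℝ) (u : Γ.G → ℝ → ℝ) : Prop :=
  Continuous (fun q : Γ.G × ℝ => u q.1 q.2) ∧
  (∀ j : Γ.E, ∀ s ∈ Set.Ioo (0:ℝ) (Γ.len j), Γ.σ j s ∉ Γ.vertexSet →
    ∀ t ∈ Set.Ioc (0:ℝ) T, ∀ (φ : ℝ → ℝ → ℝ) (p q : ℝ),
      HasDerivAt (fun τ => φ τ t) p s → HasDerivAt (fun r => φ s r) q t →
      (∃ ε : ℝ, 0 < ε ∧ ∀ τ r : ℝ, |τ - s| < ε → |r - t| < ε →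
        u (Γ.σ j τ) r - φ τ r ≤ u (Γ.σ j s) t - φ s t) →
      q + Λ.ham j s p ≤ 0) ∧
  (∀ e ∈ Γ.vertexSet, ∀ t ∈ Set.Ioc (0:ℝ) T, ∀ ψ : Γ.G → ℝ → ℝ,
    MetricGraph.C1AtVertexT Γ ψ e t →
    (∃ ε : ℝ, 0 < ε ∧ ∀ x : Γ.G, ∀ r : ℝ, dist x e < ε → |r - t| < ε →
      u x r - ψ x r ≤ u e t - ψ e t) →
    ∀ q : ℝ, HasDerivAt (fun r => ψ e r) q t →
    ∀ j : Γ.E, ∀ s ∈ Set.Icc (0:ℝ) (Γ.len j), Γ.σ j s = e →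
    ∀ p : ℝ, HasDerivWithinAt (fun τ => ψ (Γ.σ j τ) t) p (Set.Icc 0 (Γ.len j)) s →
      q + Λ.ham j s p ≤ 0)

/-- Viscosity supersolution of `u_t + H(x, D_x u) = 0` on `G × (0,T]`. -/
def EvoSupersolution (Λ : TonelliLagrangian Γ) (T : ℝ) (u : Γ.G → ℝ → ℝ) : Prop :=
  Continuous (fun q : Γ.G × ℝ => u q.1 q.2) ∧
  (∀ j : Γ.E, ∀ s ∈ Set.Ioo (0:ℝ) (Γ.len j), Γ.σ j s ∉ Γ.vertexSet →
    ∀ t ∈ Set.Ioc (0:ℝ) T, ∀ (φ : ℝ → ℝ → ℝ) (p q : ℝ),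
      HasDerivAt (fun τ => φ τ t) p s → HasDerivAt (fun r => φ s r) q t →
      (∃ ε : ℝ, 0 < ε ∧ ∀ τ r : ℝ, |τ - s| < ε → |r - t| < ε →
        u (Γ.σ j s) t - φ s t ≤ u (Γ.σ j τ) r - φ τ r) →
      0 ≤ q + Λ.ham j s p) ∧
  (∀ e ∈ Γ.vertexSet, ∀ t ∈ Set.Ioc (0:ℝ) T, ∀ ψ : Γ.G → ℝ → ℝ,
    MetricGraph.C1AtVertexT Γ ψ e t →
    (∃ ε : ℝ, 0 < ε ∧ ∀ x : Γ.G, ∀ r : ℝ, dist x e < ε → |r - t| < ε →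
      u e t - ψ e t ≤ u x r - ψ x r) →
    ∀ q : ℝ, HasDerivAt (fun r => ψ e r) q t →
    ∃ j : Γ.E, ∃ s ∈ Set.Icc (0:ℝ) (Γ.len j), Γ.σ j s = e ∧
      ∃ p : ℝ, HasDerivWithinAt (fun τ => ψ (Γ.σ j τ) t) p (Set.Icc 0 (Γ.len j)) s ∧
      0 ≤ q + Λ.ham j s p)

end TonelliLagrangian

/-! ### Derivatives on preimages of null sets -/

open MeasureTheory

/-- The derivative of a function vanishes at almost every time at which the function is
differentiable and takes a value in a given null set. No regularity of `w` is assumed. -/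
theorem ae_deriv_eq_zero_of_mem_null (w : ℝ → ℝ) {Z : Set ℝ} (hZ : volume Z = 0) :
    ∀ᵐ t : ℝ, DifferentiableAt ℝ w t → w t ∈ Z → deriv w t = 0 := by
  -- a time with nonzero derivative lies in some `B n`; locally `w` is injective on `B n` with
  -- Lipschitz inverse, so `B n` is locally a Lipschitz image of a subset of the null set `Z`
  let B : ℕ → Set ℝ := fun n =>
    {t | w t ∈ Z ∧ ∀ s, |s - t| < 1 / (n + 1 : ℝ) → |s - t| ≤ (n + 1 : ℝ) * |w s - w t|}
  have hB : ∀ n, volume (B n) = 0 := by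
    intro n
    apply measure_null_of_locally_null
    intro x hx
    have hn : (0 : ℝ) < n + 1 := by positivity
    refine ⟨B n ∩ Metric.ball x (1 / (2 * (n + 1 : ℝ))), ?_, ?_⟩
    · exact inter_mem self_mem_nhdsWithin
        (mem_nhdsWithin_of_mem_nhds (Metric.ball_mem_nhds _ (by positivity)))
    · set u := B n ∩ Metric.ball x (1 / (2 * (n + 1 : ℝ))) with hu
      have hanti : ∀ s ∈ u, ∀ t ∈ u, |s - t| ≤ (n + 1 : ℝ) * |w s - w t| := by
        intro s hs t ht
        apply ht.1.2
        have h1 := hs.2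
        have h2 := ht.2
        rw [Metric.mem_ball] at h1 h2
        have h3 := dist_triangle_right s t x
        have h4 : 1 / (2 * (n + 1 : ℝ)) + 1 / (2 * (n + 1 : ℝ)) = 1 / (n + 1 : ℝ) := by
          field_simp; norm_num
        rw [← Real.dist_eq]; linarith
      have hinj : InjOn w u := by
        intro s hs t ht hst
        have := hanti s hs t ht
        rw [hst, sub_self, abs_zero, mul_zero] at this
        exact sub_eq_zero.1 (abs_eq_zero.1 (le_antisymm this (abs_nonneg _)))
      have hg : LipschitzOnWith (n + 1 : NNReal) (Function.invFunOn w u) (w '' u) := by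
        apply LipschitzOnWith.of_dist_le_mul
        rintro _ ⟨s, hs, rfl⟩ _ ⟨t, ht, rfl⟩
        rw [hinj.leftInvOn_invFunOn hs, hinj.leftInvOn_invFunOn ht, Real.dist_eq, Real.dist_eq]
        simpa using hanti s hs t ht
      have himg : Function.invFunOn w u '' (w '' u) = u := hinj.leftInvOn_invFunOn.image_image
      have h0 : volume (w '' u) = 0 := by
        apply measure_mono_null _ hZ
        rintro _ ⟨s, hs, rfl⟩
        exact hs.1.1
      have h1 := hg.hausdorffMeasure_image_le (d := 1) zero_le_one
      rw [himg, hausdorffMeasure_real, h0, mul_zero] at h1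
      exact le_antisymm h1 zero_le
  have hall : ∀ᵐ t : ℝ, ∀ n, t ∉ B n := by
    rw [ae_all_iff]
    intro n
    exact measure_eq_zero_iff_ae_notMem.1 (hB n)
  filter_upwards [hall] with t ht hd hZt
  by_contra hne
  have hpos : 0 < |deriv w t| := abs_pos.2 hne
  have hasd := hd.hasDerivAt
  have hlim := hasd.isLittleO
  have hev := hlim.def (half_pos hpos)
  obtain ⟨δ, hδ, hball⟩ := Metric.eventually_nhds_iff.1 hev
  obtain ⟨n1, hn1⟩ := exists_nat_one_div_lt hδ
  obtain ⟨n2, hn2⟩ := exists_nat_one_div_lt (half_pos hpos)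
  apply ht (max n1 n2)
  refine ⟨hZt, fun s hs => ?_⟩
  have hm1 : (n1 : ℝ) ≤ (max n1 n2 : ℕ) := by exact_mod_cast le_max_left _ _
  have hm2 : (n2 : ℝ) ≤ (max n1 n2 : ℕ) := by exact_mod_cast le_max_right _ _
  set m : ℝ := ((max n1 n2 : ℕ) : ℝ)
  have hsd : dist s t < δ := by
    rw [Real.dist_eq]
    refine hs.trans (lt_of_le_of_lt ?_ hn1)
    gcongr
  have hh := hball hsd
  simp only [Real.norm_eq_abs, smul_eq_mul] at hh
  have h1 : |s - t| * |deriv w t| ≤ |w s - w t| + |deriv w t| / 2 * |s - t| := by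
    rw [← abs_mul]
    calc |(s - t) * deriv w t| = |(w s - w t) - (w s - w t - (s - t) * deriv w t)| := by ring_nf
      _ ≤ |w s - w t| + |w s - w t - (s - t) * deriv w t| := abs_sub _ _
      _ ≤ _ := by linarith
  have h2 : |deriv w t| / 2 * |s - t| ≤ |w s - w t| := by nlinarith
  have h3 : 1 ≤ (m + 1) * (|deriv w t| / 2) := by
    have : 1 / (m + 1) < |deriv w t| / 2 := by
      refine lt_of_le_of_lt ?_ hn2
      gcongr
    have hmp : 0 < m + 1 := by positivity
    rw [div_lt_iff₀ hmp] at this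
    linarith
  have hmp : 0 < m + 1 := by positivity
  calc |s - t| = 1 * |s - t| := by ring
    _ ≤ (m + 1) * (|deriv w t| / 2) * |s - t| := by gcongr
    _ = (m + 1) * (|deriv w t| / 2 * |s - t|) := by ring
    _ ≤ (m + 1) * |w s - w t| := by gcongr

/-! ### Uniform estimates for the Lagrangian -/

theorem ConvexOn.comp_neg_univ {g : ℝ → ℝ} (hg : ConvexOn ℝ univ g) :
    ConvexOn ℝ univ (fun v => g (-v)) := by
  refine ⟨convex_univ, fun x _ y _ a b ha hb hab => ?_⟩
  have := hg.2 (mem_univ (-x)) (mem_univ (-y)) ha hb hab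
  simpa only [smul_eq_mul, mul_neg, neg_add] using this

/-- A convex function whose chord from `0` to `r` has slope at least `c` stays above the
corresponding line beyond `r`. -/
theorem ConvexOn.linear_growth {g : ℝ → ℝ} (hg : ConvexOn ℝ univ g) {B c r v : ℝ} (hr : 0 < r)
    (h0 : g 0 ≤ B) (h1 : B + c * r ≤ g r) (hv : r ≤ v) : B + c * v ≤ g v := by
  have hv0 : 0 < v := hr.trans_le hv
  have hq : r / v ≤ 1 := (div_le_one hv0).2 hv
  have h := hg.2 (mem_univ 0) (mem_univ v) (sub_nonneg.2 hq) (div_nonneg hr.le hv0.le) (by ring)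
  simp only [smul_eq_mul, mul_zero, zero_add] at h
  rw [div_mul_cancel₀ _ hv0.ne'] at h
  have h2 : (1 - r / v) * g 0 ≤ (1 - r / v) * B :=
    mul_le_mul_of_nonneg_left h0 (sub_nonneg.2 hq)
  have h3 : B + c * r ≤ (1 - r / v) * B + r / v * g v := by linarith
  have h4 : r / v * (B + c * v) ≤ r / v * g v := by
    have : r / v * (B + c * v) = r / v * B + c * r := by field_simp
    rw [this]; linarith
  exact le_of_mul_le_mul_left h4 (div_pos hr hv0)

/-- Halving the velocity over twice the time decreases the action by at least `C`, as soon as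
`g` is large enough at the halved velocity. -/
theorem ConvexOn.two_mul_half_sub_le {g : ℝ → ℝ} (hg : ConvexOn ℝ univ g) {B C u : ℝ} (hu : 1 < u)
    (h1 : g 1 ≤ B) (h2 : u * B + C * (u - 1) ≤ g u) : 2 * g u - g (2 * u) ≤ -C := by
  have hp : 0 < 2 * u - 1 := by linarith
  have hne : 2 * u - 1 ≠ 0 := hp.ne'
  have ha : 0 ≤ u / (2 * u - 1) := by apply div_nonneg <;> linarith
  have hb : 0 ≤ (u - 1) / (2 * u - 1) := by apply div_nonneg <;> linarith
  have h := hg.2 (mem_univ 1) (mem_univ (2 * u)) ha hb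
    (by rw [← add_div, div_eq_one_iff_eq hne]; ring)
  simp only [smul_eq_mul] at h
  have e : u / (2 * u - 1) * 1 + (u - 1) / (2 * u - 1) * (2 * u) = u := by
    rw [mul_one, div_mul_eq_mul_div, ← add_div, div_eq_iff hne]; ring
  rw [e] at h
  have h' : (2 * u - 1) * g u ≤ u * g 1 + (u - 1) * g (2 * u) := by
    have := mul_le_mul_of_nonneg_left h hp.le
    have e2 : (2 * u - 1) * (u / (2 * u - 1) * g 1 + (u - 1) / (2 * u - 1) * g (2 * u))
      = u * g 1 + (u - 1) * g (2 * u) := by field_simp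
    linarith
  have h3 : u * g 1 ≤ u * B := mul_le_mul_of_nonneg_left h1 (by linarith)
  have h4 : (u - 1) * (2 * g u - g (2 * u)) ≤ (u - 1) * (-C) := by nlinarith
  exact le_of_mul_le_mul_left h4 (by linarith)

namespace TonelliLagrangian

variable {Γ : MetricGraph}

theorem exists_bound_L (Λ : TonelliLagrangian Γ) (M : ℝ) :
    ∃ C, 0 ≤ C ∧ ∀ j, ∀ x ∈ Icc (0 : ℝ) (Γ.len j), ∀ v, |v| ≤ M → |Λ.L j x v| ≤ C := by
  have h : ∀ j, ∃ C, ∀ x ∈ Icc (0 : ℝ) (Γ.len j), ∀ v, |v| ≤ M → |Λ.L j x v| ≤ C := by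
    intro j
    have hc : ContinuousOn (fun p : ℝ × ℝ => Λ.L j p.1 p.2) (Icc 0 (Γ.len j) ×ˢ Icc (-M) M) :=
      (Λ.smooth j).continuousOn.mono (prod_mono_right (subset_univ _))
    obtain ⟨C, hC⟩ := (isCompact_Icc.prod isCompact_Icc).exists_bound_of_continuousOn hc
    exact ⟨C, fun x hx v hv => hC (x, v) ⟨hx, abs_le.1 hv⟩⟩
  choose C hC using h
  refine ⟨∑ j, |C j|, Finset.sum_nonneg fun _ _ => abs_nonneg _, fun j x hx v hv => ?_⟩
  exact (hC j x hx v hv).trans ((le_abs_self _).trans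
    (Finset.single_le_sum (f := fun j => |C j|) (fun _ _ => abs_nonneg _) (Finset.mem_univ j)))

/-- The superlinear lower bound can be chosen uniformly in the base point: this is where
compactness of the edges and convexity enter. -/
theorem exists_uniform_superlinear (Λ : TonelliLagrangian Γ) (C : ℝ) :
    ∃ D, 0 ≤ D ∧ ∀ j, ∀ x ∈ Icc (0 : ℝ) (Γ.len j), ∀ v, C * |v| - D ≤ Λ.L j x v := by
  have h : ∀ j, ∃ D, ∀ x ∈ Icc (0 : ℝ) (Γ.len j), ∀ v, C * |v| - D ≤ Λ.L j x v := by
    intro j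
    refine isCompact_Icc.induction_on
      (p := fun S => ∃ D, ∀ x ∈ S, x ∈ Icc (0 : ℝ) (Γ.len j) → ∀ v, C * |v| - D ≤ Λ.L j x v)
      ?_ ?_ ?_ ?_ |>.imp fun D hD x hx => hD x hx hx
    · exact ⟨0, fun x hx => hx.elim⟩
    · rintro s t hst ⟨D, hD⟩
      exact ⟨D, fun x hx => hD x (hst hx)⟩
    · rintro s t ⟨D, hD⟩ ⟨D', hD'⟩
      refine ⟨max D D', fun x hx hxI v => ?_⟩
      rcases hx with hx | hx
      · linarith [hD x hx hxI v, le_max_left D D']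
      · linarith [hD' x hx hxI v, le_max_right D D']
    · intro x₀ hx₀
      obtain ⟨D₀, hD₀⟩ := Λ.superlinear j x₀ hx₀ (|C| + 1)
      obtain ⟨B, hB0, hB⟩ := Λ.exists_bound_L 1
      set r := |D₀| + B + 1 with hr
      have hrpos : 0 < r := by positivity
      have hlarge : ∀ v, |v| = r → B + |C| * r < Λ.L j x₀ v := by
        intro v hv
        have := hD₀ v
        rw [hv] at this
        have h1 := le_abs_self D₀
        linarith
      have hcont : ∀ v, ContinuousWithinAt (fun x => Λ.L j x v) (Icc 0 (Γ.len j)) x₀ := by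
        intro v
        have h1 : ContinuousOn (fun x => Λ.L j x v) (Icc 0 (Γ.len j)) :=
          (Λ.smooth j).continuousOn.comp (f := fun x : ℝ => (x, v)) (by fun_prop)
            (fun x hx => ⟨hx, mem_univ _⟩)
        exact h1 x₀ hx₀
      have e1 := (hcont r).eventually (lt_mem_nhds (hlarge r (abs_of_pos hrpos)))
      have e2 := (hcont (-r)).eventually
        (lt_mem_nhds (hlarge (-r) (by rw [abs_neg, abs_of_pos hrpos])))
      obtain ⟨B', hB'0, hB'⟩ := Λ.exists_bound_L r
      refine ⟨_, e1.and e2, |C| * r + B', fun x hx hxI v => ?_⟩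
      have hCv : C * |v| ≤ |C| * |v| := mul_le_mul_of_nonneg_right (le_abs_self _) (abs_nonneg _)
      have hpos : 0 ≤ |C| * r := by positivity
      have hconv := (Λ.strictconv j x hxI).convexOn
      have h0 : Λ.L j x 0 ≤ B := (le_abs_self _).trans (hB j x hxI 0 (by simp))
      by_cases hv : |v| ≤ r
      · have h1 := (abs_le.1 (hB' j x hxI v hv)).1
        have : |C| * |v| ≤ |C| * r := by gcongr
        linarith
      · push Not at hv
        rcases le_total 0 v with h | h
        · rw [abs_of_nonneg h] at hv hCv ⊢
          have := hconv.linear_growth hrpos h0 hx.1.le hv.le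
          linarith
        · rw [abs_of_nonpos h] at hv hCv ⊢
          have := hconv.comp_neg_univ.linear_growth hrpos (by simpa using h0) hx.2.le hv.le
          simp only [neg_neg] at this
          linarith
  choose D hD using h
  refine ⟨∑ j, |D j|, Finset.sum_nonneg fun _ _ => abs_nonneg _, fun j x hx v => ?_⟩
  have := (le_abs_self _).trans
    (Finset.single_le_sum (f := fun j => |D j|) (fun _ _ => abs_nonneg _) (Finset.mem_univ j))
  linarith [hD j x hx v]

theorem exists_lagOf_eq (Λ : TonelliLagrangian Γ) (x : Γ.G) :
    ∃ j, ∃ s ∈ Icc (0 : ℝ) (Γ.len j), Γ.σ j s = x ∧ Λ.lagOf x = Λ.L j s :=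
  ⟨_, _, (Γ.cover x).choose_spec.choose_spec.1, (Γ.cover x).choose_spec.choose_spec.2, rfl⟩

theorem exists_bound_lagOf (Λ : TonelliLagrangian Γ) (M : ℝ) :
    ∃ C, 0 ≤ C ∧ ∀ x v, |v| ≤ M → |Λ.lagOf x v| ≤ C := by
  obtain ⟨C, hC0, hC⟩ := Λ.exists_bound_L M
  refine ⟨C, hC0, fun x v hv => ?_⟩
  obtain ⟨j, s, hs, -, h⟩ := Λ.exists_lagOf_eq x
  rw [h]; exact hC j s hs v hv

theorem exists_superlinear_lagOf (Λ : TonelliLagrangian Γ) (C : ℝ) :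
    ∃ D, 0 ≤ D ∧ ∀ x v, C * |v| - D ≤ Λ.lagOf x v := by
  obtain ⟨D, hD0, hD⟩ := Λ.exists_uniform_superlinear C
  refine ⟨D, hD0, fun x v => ?_⟩
  obtain ⟨j, s, hs, -, h⟩ := Λ.exists_lagOf_eq x
  rw [h]; exact hD j s hs v

theorem convexOn_lagOf (Λ : TonelliLagrangian Γ) (x : Γ.G) :
    ConvexOn ℝ univ (Λ.lagOf x) := by
  obtain ⟨j, s, hs, -, h⟩ := Λ.exists_lagOf_eq x
  rw [h]; exact (Λ.strictconv j s hs).convexOn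

/-- Slowing down a fast motion by a factor of two gains as much action as desired. -/
theorem exists_slowdown_gain (Λ : TonelliLagrangian Γ) (C : ℝ) :
    ∃ K, 0 ≤ K ∧ ∀ x v, K < |v| → 2 * Λ.lagOf x (v / 2) - Λ.lagOf x v ≤ -C := by
  obtain ⟨B, hB0, hB⟩ := Λ.exists_bound_lagOf 1
  obtain ⟨D, hD0, hD⟩ := Λ.exists_superlinear_lagOf (B + |C| + 1)
  refine ⟨2 * (D + 1), by positivity, fun x v hv => ?_⟩
  have key : ∀ u, D + 1 < u → B * u + |C| * (u - 1) ≤ (B + |C| + 1) * u - D := by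
    intro u hu
    nlinarith [abs_nonneg C]
  have hCC : -|C| ≤ -C := neg_le_neg (le_abs_self _)
  refine le_trans ?_ hCC
  rcases le_total 0 v with h | h
  · rw [abs_of_nonneg h] at hv
    have h1 := (Λ.convexOn_lagOf x).two_mul_half_sub_le (B := B) (C := |C|) (u := v / 2)
      (by linarith) ((le_abs_self _).trans (hB x 1 (by simp)))
      (by
        have := hD x (v / 2)
        rw [abs_of_nonneg (a := v / 2) (by linarith)] at this
        have := key (v / 2) (by linarith)
        linarith)
    rwa [mul_div_cancel₀ v two_ne_zero] at h1
  · rw [abs_of_nonpos h] at hv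
    have h1 := (Λ.convexOn_lagOf x).comp_neg_univ.two_mul_half_sub_le (B := B) (C := |C|)
      (u := -v / 2) (by linarith) ((le_abs_self _).trans (hB x (-1) (by simp)))
      (by
        have := hD x (v / 2)
        rw [abs_of_nonpos (a := v / 2) (by linarith)] at this
        have := key (-v / 2) (by linarith)
        rw [show -(-v / 2) = v / 2 by ring]
        linarith)
    rwa [show -(-v / 2) = v / 2 by ring, show -(2 * (-v / 2)) = v by ring] at h1

end TonelliLagrangian

/-! ### Edge coordinates and velocities -/

namespace MetricGraph

variable (Γ : MetricGraph)

theorem continuousOn_σ (j : Γ.E) : ContinuousOn (Γ.σ j) (Icc 0 (Γ.len j)) := by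
  have : LipschitzOnWith 1 (Γ.σ j) (Icc 0 (Γ.len j)) :=
    LipschitzOnWith.of_dist_le_mul fun s hs t ht => by
      simpa [Real.dist_eq] using Γ.σ_lip j s hs t ht
  exact this.continuousOn

/-- The coordinate on the edge `j`, an inverse of `σ j`; its values off that edge are
irrelevant. -/
noncomputable def coord (j : Γ.E) : Γ.G → ℝ := Function.invFunOn (Γ.σ j) (Icc 0 (Γ.len j))

theorem coord_σ {j : Γ.E} {s : ℝ} (hs : s ∈ Icc 0 (Γ.len j)) : Γ.coord j (Γ.σ j s) = s :=
  (Γ.σ_inj j).leftInvOn_invFunOn hs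

theorem continuousOn_coord (j : Γ.E) : ContinuousOn (Γ.coord j) (Γ.σ j '' Icc 0 (Γ.len j)) := by
  rw [continuousOn_iff_isClosed]
  intro C hC
  refine ⟨Γ.σ j '' (Icc 0 (Γ.len j) ∩ C), ?_, ?_⟩
  · exact ((isCompact_Icc.inter_right hC).image_of_continuousOn
      ((Γ.continuousOn_σ j).mono inter_subset_left)).isClosed
  · ext x
    constructor
    · rintro ⟨hx, s, hs, rfl⟩
      refine ⟨⟨s, ⟨hs, ?_⟩, rfl⟩, s, hs, rfl⟩
      rwa [mem_preimage, Γ.coord_σ hs] at hx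
    · rintro ⟨⟨s, ⟨hs, hsC⟩, rfl⟩, h⟩
      exact ⟨by rwa [mem_preimage, Γ.coord_σ hs], h⟩

theorem finite_vertexSet : Γ.vertexSet.Finite := by
  have : Γ.vertexSet = range (fun j => Γ.σ j 0) ∪ range (fun j => Γ.σ j (Γ.len j)) := by
    ext x
    simp only [vertexSet, mem_ofPred_eq, mem_union, mem_range, exists_or, eq_comm]
  rw [this]
  exact (finite_range _).union (finite_range _)

/-- The part of the edge `j` away from all vertices; a vertex of one edge may be an interior point
of another one, so vertices are removed explicitly. -/
def edgeInt (j : Γ.E) : Set Γ.G := Γ.σ j '' Ioo 0 (Γ.len j) \ Γ.vertexSet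

variable {Γ}

theorem mem_Ioo_of_notMem {j : Γ.E} {s : ℝ} (hs : s ∈ Icc 0 (Γ.len j))
    (h : Γ.σ j s ∉ Γ.vertexSet) : s ∈ Ioo 0 (Γ.len j) := by
  refine ⟨lt_of_le_of_ne hs.1 ?_, lt_of_le_of_ne hs.2 ?_⟩
  · rintro rfl; exact h ⟨j, Or.inl rfl⟩
  · rintro rfl; exact h ⟨j, Or.inr rfl⟩

theorem edge_eq_of_mem_edgeInt {i j : Γ.E} {s : ℝ} (hs : s ∈ Icc 0 (Γ.len i))
    (h : Γ.σ i s ∈ Γ.edgeInt j) : i = j := by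
  obtain ⟨⟨t, ht, hts⟩, hv⟩ := h
  exact Γ.interiors_disjoint i j s (mem_Ioo_of_notMem hs hv) t ht hts.symm

theorem exists_mem_edgeInt {x : Γ.G} (hx : x ∉ Γ.vertexSet) : ∃ j, x ∈ Γ.edgeInt j := by
  obtain ⟨j, s, hs, rfl⟩ := Γ.cover x
  exact ⟨j, ⟨s, mem_Ioo_of_notMem hs hx, rfl⟩, hx⟩

theorem isOpen_edgeInt (j : Γ.E) : IsOpen (Γ.edgeInt j) := by
  have : (Γ.edgeInt j)ᶜ = Γ.vertexSet ∪ ⋃ i ∈ {i | i ≠ j}, Γ.σ i '' Icc 0 (Γ.len i) := by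
    ext x
    constructor
    · intro hx
      by_cases hv : x ∈ Γ.vertexSet
      · exact Or.inl hv
      · obtain ⟨i, s, hs, rfl⟩ := Γ.cover x
        refine Or.inr (mem_biUnion (x := i) ?_ ⟨s, hs, rfl⟩)
        rintro rfl
        exact hx ⟨⟨s, mem_Ioo_of_notMem hs hv, rfl⟩, hv⟩
    · rintro (hx | hx) h
      · exact h.2 hx
      · simp only [mem_iUnion] at hx
        obtain ⟨i, hi, s, hs, rfl⟩ := hx
        exact hi (edge_eq_of_mem_edgeInt hs h)
  rw [← isClosed_compl_iff, this]
  refine Γ.finite_vertexSet.isClosed.union (Set.Finite.isClosed_biUnion (toFinite _) ?_)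
  intro i _
  exact (isCompact_Icc.image_of_continuousOn (Γ.continuousOn_σ i)).isClosed

theorem coord_mem {j : Γ.E} {x : Γ.G} (hx : x ∈ Γ.edgeInt j) :
    Γ.coord j x ∈ Ioo 0 (Γ.len j) ∧ Γ.σ j (Γ.coord j x) = x := by
  obtain ⟨⟨s, hs, rfl⟩, -⟩ := hx
  rw [Γ.coord_σ (Ioo_subset_Icc_self hs)]
  exact ⟨hs, rfl⟩

theorem continuousOn_coord_edgeInt (j : Γ.E) : ContinuousOn (Γ.coord j) (Γ.edgeInt j) :=
  (Γ.continuousOn_coord j).mono fun _ hx => image_mono Ioo_subset_Icc_self hx.1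

theorem HasGDerivAt.hasDerivAt_coord {γ : ℝ → Γ.G} {t v : ℝ} {j : Γ.E}
    (h : Γ.HasGDerivAt γ t v) (hj : γ t ∈ Γ.edgeInt j) :
    HasDerivAt (fun s => Γ.coord j (γ s)) v t := by
  rcases h with ⟨hv, -⟩ | ⟨-, i, f, h1, h2, h3⟩
  · exact (hj.2 hv).elim
  · have hi : i = j := by
      apply edge_eq_of_mem_edgeInt h2.self_of_nhds
      rwa [h1.self_of_nhds]
    subst hi
    refine h3.congr_of_eventuallyEq ?_
    filter_upwards [h1, h2] with s hs1 hs2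
    rw [← hs1, Γ.coord_σ hs2]

theorem hasGDerivAt_of_coord {γ : ℝ → Γ.G} {t v : ℝ} {j : Γ.E} (hc : ContinuousAt γ t)
    (hj : γ t ∈ Γ.edgeInt j) (h : HasDerivAt (fun s => Γ.coord j (γ s)) v t) :
    Γ.HasGDerivAt γ t v := by
  have hev : ∀ᶠ s in nhds t, γ s ∈ Γ.edgeInt j := hc ((isOpen_edgeInt j).mem_nhds hj)
  refine Or.inr ⟨hj.2, j, _, ?_, ?_, h⟩
  · filter_upwards [hev] with s hs using (coord_mem hs).2
  · filter_upwards [hev] with s hs using Ioo_subset_Icc_self (coord_mem hs).1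

theorem HasGDerivAt.gderiv_eq {γ : ℝ → Γ.G} {t v : ℝ} (h : Γ.HasGDerivAt γ t v) :
    Γ.gderiv γ t = v := by
  have hex : ∃ v, Γ.HasGDerivAt γ t v := ⟨v, h⟩
  have h1 : Γ.HasGDerivAt γ t (Γ.gderiv γ t) := by
    unfold gderiv
    rw [dif_pos hex]
    exact hex.choose_spec
  by_cases hv : γ t ∈ Γ.vertexSet
  · have h0 : ∀ w, Γ.HasGDerivAt γ t w → w = 0 := by
      rintro w (⟨-, h, -⟩ | ⟨h, -⟩)
      exacts [h, (h hv).elim]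
    rw [h0 _ h1, h0 _ h]
  · obtain ⟨j, hj⟩ := exists_mem_edgeInt hv
    exact (h1.hasDerivAt_coord hj).unique (h.hasDerivAt_coord hj)

theorem gderiv_of_not_exists {γ : ℝ → Γ.G} {t : ℝ} (h : ¬ ∃ v, Γ.HasGDerivAt γ t v) :
    Γ.gderiv γ t = 0 := by
  unfold gderiv
  rw [dif_neg h]

theorem gderiv_of_mem_vertexSet {γ : ℝ → Γ.G} {t : ℝ} (h : γ t ∈ Γ.vertexSet) :
    Γ.gderiv γ t = 0 := by
  by_cases hex : ∃ v, Γ.HasGDerivAt γ t v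
  · obtain ⟨v, hv⟩ := hex
    rw [hv.gderiv_eq]
    rcases hv with ⟨-, h0, -⟩ | ⟨h0, -⟩
    exacts [h0, (h0 h).elim]
  · exact gderiv_of_not_exists hex

/-- Away from the vertices the velocity of a continuous curve is the derivative of its edge
coordinate, also where that derivative does not exist and both sides take the value `0`. -/
theorem gderiv_eq_deriv_coord {γ : ℝ → Γ.G} {t : ℝ} {j : Γ.E} (hc : ContinuousAt γ t)
    (hj : γ t ∈ Γ.edgeInt j) : Γ.gderiv γ t = deriv (fun s => Γ.coord j (γ s)) t := by
  by_cases hd : DifferentiableAt ℝ (fun s => Γ.coord j (γ s)) t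
  · exact (hasGDerivAt_of_coord hc hj hd.hasDerivAt).gderiv_eq
  · rw [deriv_zero_of_not_differentiableAt hd]
    refine gderiv_of_not_exists ?_
    rintro ⟨v, hv⟩
    exact hd (hv.hasDerivAt_coord hj).differentiableAt

theorem HasGDerivAt.comp {γ : ℝ → Γ.G} {τ : ℝ → ℝ} {t v c : ℝ} (h : Γ.HasGDerivAt γ (τ t) v)
    (hτ : HasDerivAt τ c t) : Γ.HasGDerivAt (fun s => γ (τ s)) t (v * c) := by
  rcases h with ⟨hv, rfl, hε⟩ | ⟨hv, j, f, h1, h2, h3⟩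
  · refine Or.inl ⟨hv, zero_mul _, fun ε hpos => ?_⟩
    have hcp : 0 < |c| + 1 := by positivity
    obtain ⟨δ, hδ, hd⟩ := hε (ε / (|c| + 1)) (by positivity)
    have e1 : ∀ᶠ s in nhds t, |τ s - τ t| < δ := by
      have := hτ.continuousAt.eventually (Metric.ball_mem_nhds (τ t) hδ)
      simpa [Real.dist_eq] using this
    have e2 : ∀ᶠ s in nhds t, |τ s - τ t| ≤ (|c| + 1) * |s - t| := by
      filter_upwards [hτ.isLittleO.def one_pos] with s hs
      simp only [Real.norm_eq_abs, smul_eq_mul, one_mul] at hs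
      calc |τ s - τ t| = |(τ s - τ t - (s - t) * c) + (s - t) * c| := by ring_nf
        _ ≤ |τ s - τ t - (s - t) * c| + |(s - t) * c| := abs_add_le _ _
        _ ≤ |s - t| + |s - t| * |c| := by rw [abs_mul]; linarith
        _ = _ := by ring
    obtain ⟨δ', hδ', hb⟩ := Metric.eventually_nhds_iff.1 (e1.and e2)
    refine ⟨δ', hδ', fun s hs => ?_⟩
    obtain ⟨b1, b2⟩ := hb (y := s) (by rwa [Real.dist_eq])
    calc dist (γ (τ s)) (γ (τ t)) ≤ ε / (|c| + 1) * |τ s - τ t| := hd _ b1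
      _ ≤ ε / (|c| + 1) * ((|c| + 1) * |s - t|) := by gcongr
      _ = ε * |s - t| := by field_simp
  · exact Or.inr ⟨hv, j, fun s => f (τ s), hτ.continuousAt.eventually h1,
      hτ.continuousAt.eventually h2, h3.comp t hτ⟩

theorem gderiv_congr {γ γ' : ℝ → Γ.G} {t : ℝ} (h : γ =ᶠ[nhds t] γ') :
    Γ.gderiv γ t = Γ.gderiv γ' t := by
  have key : ∀ {γ γ' : ℝ → Γ.G}, γ =ᶠ[nhds t] γ' → ∀ v, Γ.HasGDerivAt γ t v →
      Γ.HasGDerivAt γ' t v := by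
    intro γ γ' h v hv
    rcases hv with ⟨hv, h0, hε⟩ | ⟨hv, j, f, h1, h2, h3⟩
    · refine Or.inl ⟨h.self_of_nhds ▸ hv, h0, fun ε hpos => ?_⟩
      obtain ⟨δ, hδ, hd⟩ := hε ε hpos
      obtain ⟨δ', hδ', hb⟩ := Metric.eventually_nhds_iff.1 h
      refine ⟨min δ δ', lt_min hδ hδ', fun s hs => ?_⟩
      rw [← hb (y := s) (by rw [Real.dist_eq]; exact hs.trans_le (min_le_right _ _)),
        ← h.self_of_nhds]
      exact hd s (hs.trans_le (min_le_left _ _))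
    · refine Or.inr ⟨h.self_of_nhds ▸ hv, j, f, ?_, h2, h3⟩
      filter_upwards [h1, h] with s hs hs'
      rw [hs, hs']
  by_cases hex : ∃ v, Γ.HasGDerivAt γ t v
  · obtain ⟨v, hv⟩ := hex
    rw [hv.gderiv_eq, (key h v hv).gderiv_eq]
  · rw [gderiv_of_not_exists hex, gderiv_of_not_exists]
    rintro ⟨v, hv⟩
    exact hex ⟨v, key h.symm v hv⟩

/-- The velocity of a reparametrized curve, at a time where the change of time has a nonzero
derivative. No differentiability of the curve is needed: if `γ` has no velocity at `t`, then neither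
has the reparametrized curve at `e t`. -/
theorem gderiv_comp_symm (γ : ℝ → Γ.G) (e : ℝ ≃o ℝ) {t c : ℝ} (hc : c ≠ 0)
    (he : HasDerivAt e c t) : Γ.gderiv (fun s => γ (e.symm s)) (e t) = Γ.gderiv γ t / c := by
  have hsymm : HasDerivAt e.symm c⁻¹ (e t) := by
    refine HasDerivAt.of_local_left_inverse (f := e) (a := e t) e.symm.continuous.continuousAt
      (by simpa using he) hc ?_
    exact Eventually.of_forall fun s => e.apply_symm_apply s
  by_cases hex : ∃ v, Γ.HasGDerivAt γ t v
  · obtain ⟨v, hv⟩ := hex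
    have h1 := HasGDerivAt.comp (γ := γ) (τ := e.symm) (t := e t) (v := v)
      (by rwa [e.symm_apply_apply]) hsymm
    rw [h1.gderiv_eq, hv.gderiv_eq, div_eq_mul_inv]
  · rw [gderiv_of_not_exists hex, gderiv_of_not_exists, zero_div]
    rintro ⟨v, hv⟩
    have h1 := hv.comp he
    simp only [OrderIso.symm_apply_apply] at h1
    exact hex ⟨_, h1⟩

end MetricGraph

namespace TonelliLagrangian

variable {Γ : MetricGraph}

theorem lagOf_eq_of_mem_edgeInt (Λ : TonelliLagrangian Γ) {j : Γ.E} {x : Γ.G}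
    (hx : x ∈ Γ.edgeInt j) : Λ.lagOf x = Λ.L j (Γ.coord j x) := by
  obtain ⟨i, s, hs, rfl, h⟩ := Λ.exists_lagOf_eq x
  obtain rfl := MetricGraph.edge_eq_of_mem_edgeInt hs hx
  rw [h, Γ.coord_σ hs]

end TonelliLagrangian

/-! ### Absolutely continuous curves and measurability -/

namespace MetricGraph

variable {Γ : MetricGraph}

theorem AbsContOn.comp_lipschitz {X : Type*} [PseudoMetricSpace X] {a b : ℝ} {γ : ℝ → Γ.G}
    (h : Γ.AbsContOn a b γ) (hab : a ≤ b) {φ : Γ.G → X} (hφ : LipschitzWith 1 φ) :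
    AbsolutelyContinuousOnInterval (fun t => φ (γ t)) a b := by
  rw [absolutelyContinuousOnInterval_iff]
  intro ε hε
  obtain ⟨δ, hδ, H⟩ := h ε hε
  refine ⟨δ, hδ, ?_⟩
  rintro ⟨n, I⟩ ⟨hI, hdisj⟩ hsum
  simp only [uIcc_of_le hab] at hI
  have key := H n (fun i => min (I i).1 (I i).2) (fun i => max (I i).1 (I i).2) ?_ ?_ ?_
  · refine lt_of_le_of_lt ?_ key
    rw [Finset.sum_range]
    refine Finset.sum_le_sum fun i _ => ?_
    refine (hφ.dist_le_mul _ _).trans ?_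
    rw [NNReal.coe_one, one_mul]
    rcases le_total (I i).1 (I i).2 with h | h
    · simp [h]
    · simp [h, dist_comm]
  · intro i
    obtain ⟨h1, h2⟩ := hI i (Finset.mem_range.2 i.2)
    refine ⟨?_, ?_, min_le_max⟩
    · rcases min_choice (I i).1 (I i).2 with h | h <;> rw [h] <;> assumption
    · rcases max_choice (I i).1 (I i).2 with h | h <;> rw [h] <;> assumption
  · intro i _ k _ hik
    have := hdisj (x := (i : ℕ)) (by simp) (y := (k : ℕ)) (by simp)
      (by simpa [Fin.ext_iff] using hik)
    exact this.mono Ioo_subset_Ioc_self Ioo_subset_Ioc_self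
  · refine lt_of_eq_of_lt ?_ hsum
    rw [Finset.sum_range]
    refine Finset.sum_congr rfl fun i _ => ?_
    rw [max_sub_min_eq_abs', Real.dist_eq]

theorem AbsContOn.continuousOn {a b : ℝ} {γ : ℝ → Γ.G} (h : Γ.AbsContOn a b γ) (hab : a ≤ b) :
    ContinuousOn γ (Icc a b) := by
  intro t ht
  have h1 := (h.comp_lipschitz hab (LipschitzWith.dist_left (γ t))).continuousOn
  rw [uIcc_of_le hab] at h1
  have h2 := h1 t ht
  simp only [ContinuousWithinAt, dist_self] at h2
  exact tendsto_iff_dist_tendsto_zero.2 h2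

theorem absContOn_of_lipschitz {a b : ℝ} {γ : ℝ → Γ.G} {K : NNReal}
    (h : LipschitzOnWith K γ (Icc a b)) : Γ.AbsContOn a b γ := by
  intro ε hε
  refine ⟨ε / (K + 1), by positivity, fun n c d hcd _ hsum => ?_⟩
  have hK : (0 : ℝ) < K + 1 := by positivity
  calc ∑ i, dist (γ (c i)) (γ (d i)) ≤ ∑ i, (K + 1 : ℝ) * (d i - c i) := by
        refine Finset.sum_le_sum fun i _ => ?_
        obtain ⟨h1, h2, h3⟩ := hcd i
        refine (h.dist_le_mul _ h1 _ h2).trans ?_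
        rw [dist_comm, Real.dist_eq, abs_of_nonneg (sub_nonneg.2 h3)]
        have : 0 ≤ d i - c i := sub_nonneg.2 h3
        nlinarith
    _ = (K + 1) * ∑ i, (d i - c i) := by rw [Finset.mul_sum]
    _ < (K + 1) * (ε / (K + 1)) := by gcongr
    _ = ε := by field_simp

/-- A time change with Lipschitz inverse preserves absolute continuity. -/
theorem AbsContOn.comp_symm {a b : ℝ} {γ : ℝ → Γ.G} (h : Γ.AbsContOn a b γ) (e : ℝ ≃o ℝ)
    (ha : e a = a) (hb : e b = b) {K : NNReal} (hK : LipschitzWith K e.symm) :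
    Γ.AbsContOn a b (fun s => γ (e.symm s)) := by
  have ha' : e.symm a = a := by rw [OrderIso.symm_apply_eq, ha]
  have hb' : e.symm b = b := by rw [OrderIso.symm_apply_eq, hb]
  have hmem : ∀ s ∈ Icc a b, e.symm s ∈ Icc a b := by
    intro s hs
    refine ⟨?_, ?_⟩
    · rw [← ha']; exact e.symm.monotone hs.1
    · rw [← hb']; exact e.symm.monotone hs.2
  intro ε hε
  obtain ⟨δ, hδ, H⟩ := h ε hε
  have hKp : (0 : ℝ) < K + 1 := by positivity
  refine ⟨δ / (K + 1), by positivity, fun n c d hcd hdisj hsum => ?_⟩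
  refine H n (fun i => e.symm (c i)) (fun i => e.symm (d i)) ?_ ?_ ?_
  · intro i
    obtain ⟨h1, h2, h3⟩ := hcd i
    exact ⟨hmem _ h1, hmem _ h2, e.symm.monotone h3⟩
  · intro i hi k hk hik
    have := hdisj hi hk hik
    simp only [Function.onFun]
    rw [← OrderIso.image_Ioo, ← OrderIso.image_Ioo]
    exact (disjoint_image_iff e.symm.injective).2 this
  · calc ∑ i, (e.symm (d i) - e.symm (c i)) ≤ ∑ i, (K + 1 : ℝ) * (d i - c i) := by
          refine Finset.sum_le_sum fun i _ => ?_
          obtain ⟨h1, h2, h3⟩ := hcd i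
          have h4 := hK.dist_le_mul (d i) (c i)
          rw [Real.dist_eq, Real.dist_eq, abs_of_nonneg (sub_nonneg.2 h3)] at h4
          have h5 := le_abs_self (e.symm (d i) - e.symm (c i))
          have : 0 ≤ d i - c i := sub_nonneg.2 h3
          nlinarith
      _ = (K + 1) * ∑ i, (d i - c i) := by rw [Finset.mul_sum]
      _ < (K + 1) * (δ / (K + 1)) := by gcongr
      _ = δ := by field_simp

theorem isOpen_edgeTimes {a b : ℝ} {γ : ℝ → Γ.G} (hγ : ContinuousOn γ (Ioo a b)) (j : Γ.E) :
    IsOpen (Ioo a b ∩ γ ⁻¹' Γ.edgeInt j) :=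
  hγ.isOpen_inter_preimage isOpen_Ioo (isOpen_edgeInt j)

/-- Measurability in time can be checked separately on the times spent inside each edge and at each
vertex. -/
theorem aemeasurable_of_pieces {a b : ℝ} {γ : ℝ → Γ.G} {f : ℝ → ℝ}
    (h1 : ∀ j, AEMeasurable f (volume.restrict (Ioo a b ∩ γ ⁻¹' Γ.edgeInt j)))
    (h2 : ∀ e ∈ Γ.vertexSet, AEMeasurable f (volume.restrict (Ioo a b ∩ γ ⁻¹' {e}))) :
    AEMeasurable f (volume.restrict (Ioo a b)) := by
  have hV : Countable Γ.vertexSet := Γ.finite_vertexSet.countable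
  have h1' : AEMeasurable f (volume.restrict (⋃ j, Ioo a b ∩ γ ⁻¹' Γ.edgeInt j)) :=
    AEMeasurable.iUnion h1
  have h2' : AEMeasurable f (volume.restrict (⋃ e : Γ.vertexSet, Ioo a b ∩ γ ⁻¹' {e.1})) :=
    AEMeasurable.iUnion fun e => h2 e.1 e.2
  refine (aemeasurable_union_iff.2 ⟨h1', h2'⟩).mono_set ?_
  intro t ht
  by_cases hv : γ t ∈ Γ.vertexSet
  · exact Or.inr (mem_iUnion.2 ⟨⟨γ t, hv⟩, ht, rfl⟩)
  · obtain ⟨j, hj⟩ := exists_mem_edgeInt hv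
    exact Or.inl (mem_iUnion.2 ⟨j, ht, hj⟩)

theorem measurableSet_vertexTimes {a b : ℝ} {γ : ℝ → Γ.G} (hγ : ContinuousOn γ (Ioo a b))
    (e : Γ.G) : MeasurableSet (Ioo a b ∩ γ ⁻¹' {e}) := by
  have h := hγ.isOpen_inter_preimage isOpen_Ioo (isOpen_compl_singleton (x := e))
  have : Ioo a b ∩ γ ⁻¹' {e} = Ioo a b \ (Ioo a b ∩ γ ⁻¹' {e}ᶜ) := by
    ext t; simp
  rw [this]
  exact measurableSet_Ioo.diff h.measurableSet

theorem gderiv_eq_of_mem_edgeTimes {a b : ℝ} {γ : ℝ → Γ.G} (hγ : ContinuousOn γ (Ioo a b))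
    {j : Γ.E} {t : ℝ} (ht : t ∈ Ioo a b ∩ γ ⁻¹' Γ.edgeInt j) :
    Γ.gderiv γ t = deriv (fun s => Γ.coord j (γ s)) t :=
  gderiv_eq_deriv_coord (hγ.continuousAt (isOpen_Ioo.mem_nhds ht.1)) ht.2

theorem aemeasurable_gderiv {a b : ℝ} {γ : ℝ → Γ.G} (hγ : ContinuousOn γ (Ioo a b)) :
    AEMeasurable (Γ.gderiv γ) (volume.restrict (Ioo a b)) := by
  refine aemeasurable_of_pieces (γ := γ) (fun j => ?_) (fun e he => ?_)
  · refine (measurable_deriv (fun s => Γ.coord j (γ s))).aemeasurable.congr ?_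
    filter_upwards [ae_restrict_mem (isOpen_edgeTimes hγ j).measurableSet] with t ht
    exact (gderiv_eq_of_mem_edgeTimes hγ ht).symm
  · refine (measurable_const (a := (0 : ℝ))).aemeasurable.congr ?_
    filter_upwards [ae_restrict_mem (measurableSet_vertexTimes hγ e)] with t ht
    have h0 : γ t = e := ht.2
    exact (gderiv_of_mem_vertexSet (by rw [h0]; exact he)).symm

end MetricGraph

namespace TonelliLagrangian

open MetricGraph

variable {Γ : MetricGraph}

/-- The integrand of the action, with velocity rescaled by `c`, is measurable along a continuous
curve. -/
theorem aemeasurable_lagOf (Λ : TonelliLagrangian Γ) {a b : ℝ} {γ : ℝ → Γ.G}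
    (hγ : ContinuousOn γ (Ioo a b)) {c : ℝ → ℝ} (hc : Measurable c) :
    AEMeasurable (fun t => Λ.lagOf (γ t) (Γ.gderiv γ t / c t)) (volume.restrict (Ioo a b)) := by
  refine aemeasurable_of_pieces (γ := γ) (fun j => ?_) (fun e he => ?_)
  · have hlen : (0 : ℝ) ≤ Γ.len j := (Γ.len_pos j).le
    -- the Lagrangian of the edge, extended continuously to all base points
    have hL : Continuous (fun p : ℝ × ℝ => Λ.L j (projIcc 0 (Γ.len j) hlen p.1) p.2) := by
      refine (Λ.smooth j).continuousOn.comp_continuous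
        (f := fun p : ℝ × ℝ => ((projIcc 0 (Γ.len j) hlen p.1 : ℝ), p.2)) ?_ ?_
      · exact (continuous_subtype_val.comp (continuous_projIcc.comp continuous_fst)).prodMk
          continuous_snd
      · intro p
        exact ⟨(projIcc 0 (Γ.len j) hlen p.1).2, mem_univ _⟩
    have hU := (isOpen_edgeTimes hγ j).measurableSet
    have hf : AEMeasurable (fun t => Γ.coord j (γ t))
        (volume.restrict (Ioo a b ∩ γ ⁻¹' Γ.edgeInt j)) := by
      refine ContinuousOn.aemeasurable ?_ hU
      exact (continuousOn_coord_edgeInt j).comp (hγ.mono inter_subset_left) fun t ht => ht.2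
    have hd : AEMeasurable (fun t => deriv (fun s => Γ.coord j (γ s)) t / c t)
        (volume.restrict (Ioo a b ∩ γ ⁻¹' Γ.edgeInt j)) :=
      ((measurable_deriv _).div hc).aemeasurable
    refine (hL.measurable.comp_aemeasurable (hf.prodMk hd)).congr ?_
    filter_upwards [ae_restrict_mem hU] with t ht
    have hm := coord_mem (Γ := Γ) (j := j) ht.2
    simp only [Function.comp_apply]
    rw [gderiv_eq_of_mem_edgeTimes hγ ht, Λ.lagOf_eq_of_mem_edgeInt ht.2,
      projIcc_of_mem hlen (Ioo_subset_Icc_self hm.1)]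
  · refine (measurable_const (a := Λ.lagOf e 0)).aemeasurable.congr ?_
    filter_upwards [ae_restrict_mem (measurableSet_vertexTimes hγ e)] with t ht
    have h0 : γ t = e := ht.2
    rw [gderiv_of_mem_vertexSet (by rw [h0]; exact he), h0, zero_div]

end TonelliLagrangian

/-! ### Competitors of bounded speed -/

namespace MetricGraph

variable {Γ : MetricGraph}

/-- `x` can be joined to `y` in time `T` by a curve that is 1-Lipschitz and has edge velocity at
most `1` almost everywhere. As `σ j` is only assumed to be 1-Lipschitz, the second
condition is not a consequence of the first. -/
def Reach (Γ : MetricGraph) (x y : Γ.G) (T : ℝ) : Prop :=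
  0 < T ∧ ∃ α : ℝ → Γ.G, α 0 = x ∧ α T = y ∧ LipschitzOnWith 1 α (Icc 0 T) ∧
    ∀ᵐ t, t ∈ Ioo 0 T → |Γ.gderiv α t| ≤ 1

theorem reach_edge (j : Γ.E) {s s' : ℝ} (hs : s ∈ Icc 0 (Γ.len j)) (hs' : s' ∈ Icc 0 (Γ.len j)) :
    Γ.Reach (Γ.σ j s) (Γ.σ j s') (Γ.len j) := by
  have hl := Γ.len_pos j
  have hslope : |(s' - s) / Γ.len j| ≤ 1 := by
    rw [abs_div, abs_of_pos hl, div_le_one hl, abs_le]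
    constructor <;> linarith [hs.1, hs.2, hs'.1, hs'.2]
  have hmem : ∀ t ∈ Icc 0 (Γ.len j), s + (s' - s) / Γ.len j * t ∈ Icc 0 (Γ.len j) := by
    intro t ht
    have h0 : 0 ≤ t / Γ.len j := div_nonneg ht.1 hl.le
    have h1 : t / Γ.len j ≤ 1 := (div_le_one hl).2 ht.2
    have : s + (s' - s) / Γ.len j * t = (1 - t / Γ.len j) * s + t / Γ.len j * s' := by
      field_simp; ring
    rw [this]
    constructor <;> nlinarith [hs.1, hs.2, hs'.1, hs'.2]
  refine ⟨hl, fun t => Γ.σ j (s + (s' - s) / Γ.len j * t), by simp, ?_, ?_, ?_⟩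
  · simp only
    congr 1
    field_simp; ring
  · refine LipschitzOnWith.of_dist_le_mul fun t ht t' ht' => ?_
    refine (Γ.σ_lip j _ (hmem t ht) _ (hmem t' ht')).trans ?_
    rw [NNReal.coe_one, one_mul, Real.dist_eq, add_sub_add_left_eq_sub, ← mul_sub, abs_mul]
    exact mul_le_of_le_one_left (abs_nonneg _) hslope
  · refine Eventually.of_forall fun t ht => ?_
    by_cases hv : Γ.σ j (s + (s' - s) / Γ.len j * t) ∈ Γ.vertexSet
    · rw [gderiv_of_mem_vertexSet (γ := fun t => Γ.σ j (s + (s' - s) / Γ.len j * t)) hv]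
      simp
    · have : Γ.HasGDerivAt (fun t => Γ.σ j (s + (s' - s) / Γ.len j * t)) t
          ((s' - s) / Γ.len j) := by
        refine Or.inr ⟨hv, j, fun t => s + (s' - s) / Γ.len j * t,
          Eventually.of_forall fun _ => rfl, ?_, ?_⟩
        · filter_upwards [isOpen_Ioo.mem_nhds ht] with r hr
          exact hmem r (Ioo_subset_Icc_self hr)
        · simpa using ((hasDerivAt_id t).const_mul ((s' - s) / Γ.len j)).const_add s
      rw [this.gderiv_eq]
      exact hslope

theorem Reach.trans {x y z : Γ.G} {T T' : ℝ} (h : Γ.Reach x y T) (h' : Γ.Reach y z T') :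
    Γ.Reach x z (T + T') := by
  obtain ⟨hT, α, h0, h1, hL, hv⟩ := h
  obtain ⟨hT', β, h0', h1', hL', hv'⟩ := h'
  refine ⟨by positivity, fun t => if t ≤ T then α t else β (t - T), ?_, ?_, ?_, ?_⟩
  · simp [hT.le, h0]
  · simp [not_le.2 hT', h1']
  · have key : ∀ t ∈ Icc 0 (T + T'), ∀ t' ∈ Icc 0 (T + T'), t ≤ t' →
        dist (if t ≤ T then α t else β (t - T)) (if t' ≤ T then α t' else β (t' - T)) ≤ t' - t := by
      intro t ht t' ht' htt
      by_cases c : t ≤ T <;> by_cases c' : t' ≤ T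
      · simp only [c, c', if_true]
        have := hL.dist_le_mul t ⟨ht.1, c⟩ t' ⟨ht'.1, c'⟩
        rwa [NNReal.coe_one, one_mul, dist_comm t t', Real.dist_eq,
          abs_of_nonneg (sub_nonneg.2 htt)] at this
      · simp only [c, c', if_true, if_false]
        push Not at c'
        have e1 := hL.dist_le_mul t ⟨ht.1, c⟩ T ⟨hT.le, le_rfl⟩
        have e2 := hL'.dist_le_mul 0 ⟨le_rfl, hT'.le⟩ (t' - T) ⟨by linarith, by linarith [ht'.2]⟩
        rw [NNReal.coe_one, one_mul, dist_comm t T, Real.dist_eq,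
          abs_of_nonneg (sub_nonneg.2 c), h1] at e1
        rw [NNReal.coe_one, one_mul, dist_comm (0 : ℝ), Real.dist_eq,
          abs_of_nonneg (by linarith), h0'] at e2
        linarith [dist_triangle (α t) y (β (t' - T))]
      · exact absurd (htt.trans c') c
      · simp only [c, c', if_false]
        push Not at c c'
        have := hL'.dist_le_mul (t - T) ⟨by linarith, by linarith [ht.2]⟩
          (t' - T) ⟨by linarith, by linarith [ht'.2]⟩
        rw [NNReal.coe_one, one_mul, dist_comm (t - T), Real.dist_eq,
          abs_of_nonneg (by linarith)] at this
        linarith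
    refine LipschitzOnWith.of_dist_le_mul fun t ht t' ht' => ?_
    rw [NNReal.coe_one, one_mul]
    rcases le_total t t' with c | c
    · rw [dist_comm t t', Real.dist_eq, abs_of_nonneg (sub_nonneg.2 c)]
      exact key t ht t' ht' c
    · rw [Real.dist_eq, abs_of_nonneg (sub_nonneg.2 c), dist_comm]
      exact key t' ht' t ht c
  · have hne : ∀ᵐ t : ℝ, t ≠ T := by simp [ae_iff]
    have hsh := (measurePreserving_sub_right volume T).quasiMeasurePreserving.ae hv'
    filter_upwards [hv, hne, hsh] with t e1 e2 e3 ht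
    rcases lt_or_gt_of_ne e2 with c | c
    · rw [gderiv_congr (γ' := α)]
      · exact e1 ⟨ht.1, c⟩
      · filter_upwards [Iio_mem_nhds c] with r hr
        rw [if_pos (le_of_lt hr)]
    · rw [gderiv_congr (γ' := fun r => β (r - T))]
      · have := gderiv_comp_symm β (OrderIso.addRight T) (t := t - T) (c := 1) one_ne_zero
          (show HasDerivAt (fun r => r + T) 1 (t - T) from (hasDerivAt_id' (t - T)).add_const T)
        simp only [OrderIso.addRight_symm, OrderIso.addRight_apply, div_one, sub_add_cancel,
          ← sub_eq_add_neg] at this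
        rw [this]
        exact e3 ⟨by linarith, by linarith [ht.2]⟩
      · filter_upwards [Ioi_mem_nhds c] with r hr
        rw [if_neg (not_le.2 hr)]

theorem isClosed_edge (j : Γ.E) : IsClosed (Γ.σ j '' Icc 0 (Γ.len j)) :=
  (isCompact_Icc.image_of_continuousOn (Γ.continuousOn_σ j)).isClosed

/-- The graph is connected and has finitely many edges, so any two of its points can be joined at
speed at most `1` in a time that is bounded uniformly. -/
theorem exists_uniform_reach (Γ : MetricGraph) :
    ∃ R : ℝ, 0 < R ∧ ∀ x y : Γ.G, ∃ T ≤ R, Γ.Reach x y T := by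
  -- `B i j`: the points of the edge `i` can be joined to those of `j` in bounded time
  let B : Γ.E → Γ.E → Prop := fun i j => ∃ C : ℝ, ∀ s ∈ Icc 0 (Γ.len i), ∀ s' ∈ Icc 0 (Γ.len j),
    ∃ T ≤ C, Γ.Reach (Γ.σ i s) (Γ.σ j s') T
  have Brefl : ∀ i, B i i := fun i =>
    ⟨Γ.len i, fun s hs s' hs' => ⟨_, le_rfl, reach_edge i hs hs'⟩⟩
  have Btrans : ∀ i j k, B i j → B j k → B i k := by
    rintro i j k ⟨C, hC⟩ ⟨C', hC'⟩
    refine ⟨C + C', fun s hs s' hs' => ?_⟩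
    have h0 : (0 : ℝ) ∈ Icc 0 (Γ.len j) := ⟨le_rfl, (Γ.len_pos j).le⟩
    obtain ⟨T, hT, h⟩ := hC s hs 0 h0
    obtain ⟨T', hT', h'⟩ := hC' 0 h0 s' hs'
    exact ⟨T + T', add_le_add hT hT', h.trans h'⟩
  have Bmeet : ∀ i j x, x ∈ Γ.σ i '' Icc 0 (Γ.len i) → x ∈ Γ.σ j '' Icc 0 (Γ.len j) → B i j := by
    rintro i j _ ⟨s, hs, rfl⟩ ⟨s', hs', hx⟩
    refine ⟨Γ.len i + Γ.len j, fun r hr r' hr' => ⟨_, le_rfl, ?_⟩⟩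
    refine (reach_edge i hr hs).trans ?_
    rw [← hx]
    exact reach_edge j hs' hr'
  have Ball : ∀ i j, B i j := by
    intro i j
    by_contra hij
    obtain ⟨T, hT, γ, h0, h1, hL⟩ := Γ.path_exists (Γ.σ i 0) (Γ.σ j 0)
    have hpre : IsPreconnected (γ '' Icc 0 T) := isPreconnected_Icc.image _ hL.continuousOn
    rw [isPreconnected_closed_iff] at hpre
    obtain ⟨x, -, hx1, hx2⟩ := hpre (⋃ k ∈ {k | B i k}, Γ.σ k '' Icc 0 (Γ.len k))
      (⋃ k ∈ {k | ¬ B i k}, Γ.σ k '' Icc 0 (Γ.len k))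
      (Set.Finite.isClosed_biUnion (toFinite _) fun k _ => isClosed_edge k)
      (Set.Finite.isClosed_biUnion (toFinite _) fun k _ => isClosed_edge k) (by
        intro x _
        obtain ⟨k, s, hs, rfl⟩ := Γ.cover x
        by_cases hk : B i k
        · exact Or.inl (mem_biUnion (x := k) hk ⟨s, hs, rfl⟩)
        · exact Or.inr (mem_biUnion (x := k) hk ⟨s, hs, rfl⟩))
      ⟨γ 0, ⟨0, ⟨le_rfl, hT⟩, rfl⟩, mem_biUnion (x := i) (Brefl i)
        ⟨0, ⟨le_rfl, (Γ.len_pos i).le⟩, h0.symm⟩⟩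
      ⟨γ T, ⟨T, ⟨hT, le_rfl⟩, rfl⟩, mem_biUnion (x := j) hij
        ⟨0, ⟨le_rfl, (Γ.len_pos j).le⟩, h1.symm⟩⟩
    simp only [mem_iUnion] at hx1 hx2
    obtain ⟨k, hk, hxk⟩ := hx1
    obtain ⟨l, hl, hxl⟩ := hx2
    exact hl (Btrans _ _ _ hk (Bmeet k l x hxk hxl))
  choose C hC using Ball
  obtain ⟨M, hM⟩ := (finite_range fun p : Γ.E × Γ.E => C p.1 p.2).bddAbove
  refine ⟨max M 1, by positivity, fun x y => ?_⟩
  obtain ⟨i, s, hs, rfl⟩ := Γ.cover x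
  obtain ⟨j, s', hs', rfl⟩ := Γ.cover y
  obtain ⟨T, hT, h⟩ := hC i j s hs s' hs'
  exact ⟨T, (hT.trans (hM ⟨(i, j), rfl⟩)).trans (le_max_left _ _), h⟩

/-- Any two points can be joined in any prescribed time by a curve whose speed is inversely
proportional to that time, with a constant depending only on the graph. -/
theorem exists_competitor (Γ : MetricGraph) :
    ∃ R : ℝ, 0 < R ∧ ∀ (x y : Γ.G) (a b : ℝ), a < b → ∃ β : ℝ → Γ.G, β a = x ∧ β b = y ∧
      Γ.AbsContOn a b β ∧ ∀ᵐ t, t ∈ Ioo a b → |Γ.gderiv β t| ≤ R / (b - a) := by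
  obtain ⟨R, hR, H⟩ := Γ.exists_uniform_reach
  refine ⟨R, hR, fun x y a b hab => ?_⟩
  obtain ⟨T, hTR, hT, α, h0, h1, hL, hv⟩ := H x y
  have hba : 0 < b - a := sub_pos.2 hab
  have hc : 0 < (b - a) / T := div_pos hba hT
  let e : ℝ ≃o ℝ := (OrderIso.mulRight₀ ((b - a) / T) hc).trans (OrderIso.addRight a)
  have he : ∀ t, e t = t * ((b - a) / T) + a := fun t => rfl
  have hsymm : ∀ s, e.symm s = (s - a) * (T / (b - a)) := by
    intro s
    rw [OrderIso.symm_apply_eq, he]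
    field_simp
    ring
  refine ⟨fun s => α (e.symm s), ?_, ?_, ?_, ?_⟩
  · simp [hsymm, h0]
  · simp only [hsymm]
    rw [mul_div_cancel₀ _ hba.ne', h1]
  · refine absContOn_of_lipschitz (K := (T / (b - a)).toNNReal) ?_
    refine LipschitzOnWith.of_dist_le_mul fun s hs s' hs' => ?_
    have hm : ∀ s ∈ Icc a b, e.symm s ∈ Icc 0 T := by
      intro s hs
      rw [hsymm]
      refine ⟨mul_nonneg (sub_nonneg.2 hs.1) (by positivity), ?_⟩
      rw [mul_div_assoc', div_le_iff₀ hba]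
      nlinarith [hs.2]
    refine (hL.dist_le_mul _ (hm s hs) _ (hm s' hs')).trans ?_
    rw [NNReal.coe_one, one_mul, Real.coe_toNNReal _ (by positivity), Real.dist_eq, Real.dist_eq,
      hsymm, hsymm, ← sub_mul, abs_mul, abs_of_pos (div_pos hT hba), sub_sub_sub_cancel_right,
      mul_comm]
  · rw [ae_iff] at hv ⊢
    have hnull := addHaar_image_eq_zero_of_differentiableOn_of_addHaar_eq_zero volume
      (f := e) (s := {t | ¬ (t ∈ Ioo 0 T → |Γ.gderiv α t| ≤ 1)}) (by
        have : (e : ℝ → ℝ) = fun t => t * ((b - a) / T) + a := funext he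
        rw [this]; fun_prop) hv
    refine measure_mono_null ?_ hnull
    intro s hs
    refine ⟨e.symm s, ?_, e.apply_symm_apply s⟩
    simp only [mem_ofPred_eq, Classical.not_imp, not_le] at hs ⊢
    obtain ⟨hs, hgt⟩ := hs
    have hd := gderiv_comp_symm α e (t := e.symm s) (c := (b - a) / T) hc.ne' (by
      have : (e : ℝ → ℝ) = fun t => t * ((b - a) / T) + a := funext he
      rw [this]
      simpa using ((hasDerivAt_id (e.symm s)).mul_const ((b - a) / T)).add_const a)
    rw [e.apply_symm_apply] at hd
    refine ⟨?_, ?_⟩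
    · rw [hsymm]
      refine ⟨mul_pos (sub_pos.2 hs.1) (by positivity), ?_⟩
      rw [mul_div_assoc', div_lt_iff₀ hba]
      nlinarith [hs.2]
    · rw [hd, abs_div, abs_of_pos hc, lt_div_iff₀ hc] at hgt
      refine lt_of_le_of_lt ?_ hgt
      rw [div_mul_div_cancel₀ hba.ne', one_le_div hT]
      exact hTR

end MetricGraph

/-! ### Slow times and changes of time -/

namespace TonelliLagrangian

open MetricGraph

variable {Γ : MetricGraph}

theorem action_eq_Ioo (Λ : TonelliLagrangian Γ) {a b : ℝ} (hab : a ≤ b) (γ : ℝ → Γ.G) :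
    Λ.action a b γ = ∫ t in Ioo a b, Λ.lagOf (γ t) (Γ.gderiv γ t) := by
  rw [action, intervalIntegral.integral_of_le hab, integral_Ioc_eq_integral_Ioo]

/-- Comparing a minimizer with a curve of bounded speed between the same endpoints shows that a
minimizer cannot be fast almost everywhere. -/
theorem exists_slow_bound (Λ : TonelliLagrangian Γ) {ε : ℝ} (hε : 0 < ε) :
    ∃ M : ℝ, 0 ≤ M ∧ ∀ a b : ℝ, ε ≤ b - a → ∀ γ : ℝ → Γ.G, Λ.Minimizer a b γ →
      volume (Ioo a b ∩ {t | |Γ.gderiv γ t| ≤ M}) ≠ 0 := by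
  obtain ⟨R, hR, hcomp⟩ := Γ.exists_competitor
  obtain ⟨C, hC0, hC⟩ := Λ.exists_bound_lagOf (R / ε)
  obtain ⟨D, hD0, hD⟩ := Λ.exists_superlinear_lagOf 1
  refine ⟨C + D + 1, by positivity, fun a b hab γ hγ hnull => ?_⟩
  have hab' : a < b := by linarith
  obtain ⟨β, hβa, hβb, hβ, hv⟩ := hcomp (γ a) (γ b) a b hab'
  have hbound : ∀ᵐ t ∂(volume.restrict (Ioo a b)), ‖Λ.lagOf (β t) (Γ.gderiv β t)‖ ≤ C := by
    rw [ae_restrict_iff' measurableSet_Ioo]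
    filter_upwards [hv] with t ht hmem
    refine hC _ _ ((ht hmem).trans ?_)
    gcongr
  have hInt : IntegrableOn (fun t => Λ.lagOf (β t) (Γ.gderiv β t)) (Ioo a b) := by
    refine IntegrableOn.of_bound (C := C) (by simp) ?_ hbound
    have := Λ.aemeasurable_lagOf (a := a) (b := b) ((hβ.continuousOn hab'.le).mono Ioo_subset_Icc_self)
      (c := fun _ => 1) measurable_const
    simp only [div_one] at this
    exact this.aestronglyMeasurable
  have h1 := hγ.2.2 β hβ ((integrableOn_Icc_iff_integrableOn_Ioo).2 hInt) hβa hβb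
  rw [Λ.action_eq_Ioo hab'.le, Λ.action_eq_Ioo hab'.le] at h1
  have hvol : volume.real (Ioo a b) = b - a := by simp [Measure.real, hab'.le]
  have h2 : ∫ t in Ioo a b, Λ.lagOf (β t) (Γ.gderiv β t) ≤ C * (b - a) := by
    have := integral_mono_ae hInt (integrable_const C) (by
      filter_upwards [hbound] with t ht
      exact (le_abs_self _).trans ht)
    rw [setIntegral_const, hvol, smul_eq_mul] at this
    linarith
  have h3 : (C + 1) * (b - a) ≤ ∫ t in Ioo a b, Λ.lagOf (γ t) (Γ.gderiv γ t) := by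
    have hg : IntegrableOn (fun t => Λ.lagOf (γ t) (Γ.gderiv γ t)) (Ioo a b) :=
      (integrableOn_Icc_iff_integrableOn_Ioo).1 hγ.2.1
    have := integral_mono_ae (integrable_const (C + 1)) hg (by
      rw [EventuallyLE, ae_restrict_iff' measurableSet_Ioo]
      have hae : ∀ᵐ t, t ∉ Ioo a b ∩ {t | |Γ.gderiv γ t| ≤ C + D + 1} :=
        measure_eq_zero_iff_ae_notMem.1 hnull
      filter_upwards [hae] with t ht hmem
      have hgt : C + D + 1 < |Γ.gderiv γ t| := by
        by_contra hle
        exact ht ⟨hmem, not_lt.1 hle⟩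
      have := hD (γ t) (Γ.gderiv γ t)
      linarith)
    rw [setIntegral_const, hvol, smul_eq_mul] at this
    linarith
  nlinarith

end TonelliLagrangian

/-- A measurable subset of an interval contains measurable subsets of every smaller measure. -/
theorem exists_measurable_subset_measure_eq {a b m : ℝ} (hab : a ≤ b) {A : Set ℝ}
    (hA : MeasurableSet A) (hsub : A ⊆ Ioo a b) (hm0 : 0 ≤ m) (hm : m ≤ volume.real A) :
    ∃ A' ⊆ A, MeasurableSet A' ∧ volume.real A' = m := by
  have hInt : ∀ x y, IntervalIntegrable (A.indicator fun _ => (1 : ℝ)) volume x y := by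
    intro x y
    exact ⟨(integrable_const 1).indicator hA, (integrable_const 1).indicator hA⟩
  have hval : ∀ x, a ≤ x → ∫ t in a..x, A.indicator (fun _ => (1 : ℝ)) t
      = volume.real (A ∩ Ioc a x) := by
    intro x hx
    rw [intervalIntegral.integral_of_le hx, integral_indicator hA, setIntegral_const,
      measureReal_restrict_apply hA]
    simp
  have hcont : Continuous fun x => ∫ t in a..x, A.indicator (fun _ => (1 : ℝ)) t :=
    intervalIntegral.continuous_primitive hInt a
  have hb : ∫ t in a..b, A.indicator (fun _ => (1 : ℝ)) t = volume.real A := by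
    rw [hval b hab, inter_eq_left.2 (hsub.trans Ioo_subset_Ioc_self)]
  obtain ⟨x, hx, hxm⟩ := intermediate_value_Icc hab hcont.continuousOn (show m ∈ Icc _ _ by
    rw [hb]
    simpa using ⟨hm0, hm⟩)
  refine ⟨A ∩ Ioc a x, inter_subset_left, hA.inter measurableSet_Ioc, ?_⟩
  rw [← hval x hx.1]
  exact hxm

theorem volume_image_eq_zero_of_lipschitz {θ : ℝ → ℝ} {K : NNReal} (hθ : LipschitzWith K θ)
    {N : Set ℝ} (hN : volume N = 0) : volume (θ '' N) = 0 := by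
  have h := hθ.hausdorffMeasure_image_le (d := 1) zero_le_one N
  rw [hausdorffMeasure_real, hN, mul_zero] at h
  exact le_antisymm h zero_le

/-- The change of time with prescribed density `ψ`. -/
theorem exists_timeChange {ψ : ℝ → ℝ} (hψ : Measurable ψ) (hlow : ∀ t, 1 / 2 ≤ ψ t)
    (hup : ∀ t, ψ t ≤ 2) (a : ℝ) :
    ∃ e : ℝ ≃o ℝ, (∀ t, e t = a + ∫ r in a..t, ψ r) ∧ LipschitzWith 2 e ∧
      LipschitzWith 2 e.symm ∧ ∀ᵐ t, HasDerivAt e (ψ t) t := by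
  have hloc : LocallyIntegrable ψ volume := by
    refine (locallyIntegrable_const (2 : ℝ)).mono hψ.aestronglyMeasurable
      (Eventually.of_forall fun t => ?_)
    rw [Real.norm_eq_abs, Real.norm_eq_abs, abs_of_nonneg (by linarith [hlow t])]
    simpa using hup t
  have hInt : ∀ x y, IntervalIntegrable ψ volume x y := fun x y =>
    (LocallyIntegrable.integrableOn_isCompact hloc isCompact_uIcc).intervalIntegrable
  set θ : ℝ → ℝ := fun t => a + ∫ r in a..t, ψ r with hθ
  have hdiff : ∀ s t, θ t - θ s = ∫ r in s..t, ψ r := by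
    intro s t
    simp only [hθ, add_sub_add_left_eq_sub]
    exact intervalIntegral.integral_interval_sub_left (hInt _ _) (hInt _ _)
  have hlo : ∀ s t, s ≤ t → (t - s) / 2 ≤ θ t - θ s := by
    intro s t hst
    rw [hdiff]
    have := intervalIntegral.integral_mono_on hst (intervalIntegrable_const (c := (1 / 2 : ℝ)))
      (hInt s t) fun r _ => hlow r
    rw [intervalIntegral.integral_const, smul_eq_mul] at this
    linarith
  have hhi : ∀ s t, s ≤ t → θ t - θ s ≤ 2 * (t - s) := by
    intro s t hst
    rw [hdiff]
    have := intervalIntegral.integral_mono_on hst (hInt s t)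
      (intervalIntegrable_const (c := (2 : ℝ))) fun r _ => hup r
    rw [intervalIntegral.integral_const, smul_eq_mul] at this
    linarith
  have hmono : StrictMono θ := fun s t hst => by
    have := hlo s t hst.le
    linarith
  have hlip : LipschitzWith 2 θ := by
    refine LipschitzWith.of_dist_le_mul fun s t => ?_
    rw [Real.dist_eq, Real.dist_eq]
    rcases le_total s t with h | h
    · rw [abs_sub_comm, abs_sub_comm s t, abs_of_nonneg (sub_nonneg.2 (hmono.monotone h)),
        abs_of_nonneg (sub_nonneg.2 h)]
      exact hhi s t h
    · rw [abs_of_nonneg (sub_nonneg.2 (hmono.monotone h)), abs_of_nonneg (sub_nonneg.2 h)]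
      exact hhi t s h
  have hsurj : Function.Surjective θ := by
    refine hlip.continuous.surjective ?_ ?_
    · refine tendsto_atTop_mono' atTop (f₁ := fun t => θ 0 + t / 2) ?_ ?_
      · filter_upwards [eventually_ge_atTop 0] with t ht
        linarith [hlo 0 t ht]
      · exact tendsto_atTop_add_const_left _ _ (tendsto_id.atTop_div_const (by norm_num))
    · refine tendsto_atBot_mono' atBot (f₁ := fun t => θ 0 + t / 2) ?_ ?_
      · filter_upwards [eventually_le_atBot 0] with t ht
        linarith [hlo t 0 ht]
      · exact tendsto_atBot_add_const_left _ _ (tendsto_id.atBot_div_const (by norm_num))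
  refine ⟨StrictMono.orderIsoOfSurjective θ hmono hsurj, fun t => rfl, hlip, ?_, ?_⟩
  · refine LipschitzWith.of_dist_le_mul fun x y => ?_
    obtain ⟨s, rfl⟩ := hsurj x
    obtain ⟨t, rfl⟩ := hsurj y
    have hs : ∀ s, (StrictMono.orderIsoOfSurjective θ hmono hsurj).symm (θ s) = s := fun s =>
      (StrictMono.orderIsoOfSurjective θ hmono hsurj).symm_apply_apply s
    rw [hs, hs, Real.dist_eq, Real.dist_eq, NNReal.coe_ofNat]
    rcases le_total s t with h | h
    · rw [abs_sub_comm, abs_sub_comm (θ s), abs_of_nonneg (sub_nonneg.2 (hmono.monotone h)),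
        abs_of_nonneg (sub_nonneg.2 h)]
      linarith [hlo s t h]
    · rw [abs_of_nonneg (sub_nonneg.2 (hmono.monotone h)), abs_of_nonneg (sub_nonneg.2 h)]
      linarith [hlo t s h]
  · filter_upwards [LocallyIntegrable.ae_hasDerivAt_integral hloc] with t ht
    exact (ht a).const_add a

namespace TonelliLagrangian

open MetricGraph

variable {Γ : MetricGraph}

/-- The action of a curve run with local time dilation factor `ψ`. -/
theorem exists_reparam (Λ : TonelliLagrangian Γ) {a b : ℝ} (hab : a < b) {γ : ℝ → Γ.G}
    (hγ : Γ.AbsContOn a b γ) {ψ : ℝ → ℝ} (hψ : Measurable ψ) (hlow : ∀ t, 1 / 2 ≤ ψ t)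
    (hup : ∀ t, ψ t ≤ 2) (htot : ∫ t in a..b, ψ t = b - a)
    (hInt : IntegrableOn (fun t => ψ t * Λ.lagOf (γ t) (Γ.gderiv γ t / ψ t)) (Ioo a b)) :
    ∃ α : ℝ → Γ.G, Γ.AbsContOn a b α ∧ Λ.ActionIntegrableOn a b α ∧ α a = γ a ∧ α b = γ b ∧
      Λ.action a b α = ∫ t in Ioo a b, ψ t * Λ.lagOf (γ t) (Γ.gderiv γ t / ψ t) := by
  obtain ⟨e, he, hlip, hlip', hder⟩ := exists_timeChange hψ hlow hup a
  have ha : e a = a := by simp [he]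
  have hb : e b = b := by rw [he, htot]; ring
  set N := toMeasurable volume {t | ¬ HasDerivAt e (ψ t) t} with hN
  have hN0 : volume N = 0 := by rw [hN, measure_toMeasurable]; exact hder
  have hNm : MeasurableSet N := measurableSet_toMeasurable _ _
  set D := Ioo a b \ N with hD
  have hDm : MeasurableSet D := measurableSet_Ioo.diff hNm
  have hDder : ∀ t ∈ D, HasDerivAt e (ψ t) t := by
    intro t ht
    by_contra h
    exact ht.2 (subset_toMeasurable _ _ h)
  have hDae : D =ᵐ[volume] Ioo a b := sdiff_null_ae_eq_self hN0
  have himg : e '' D =ᵐ[volume] Ioo a b := by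
    have h1 : e '' D = Ioo a b \ e '' N := by
      rw [hD, image_sdiff e.injective, OrderIso.image_Ioo, ha, hb]
    rw [h1]
    exact sdiff_null_ae_eq_self (volume_image_eq_zero_of_lipschitz hlip hN0)
  set g : ℝ → ℝ := fun s => Λ.lagOf (γ (e.symm s)) (Γ.gderiv (fun r => γ (e.symm r)) s) with hg
  have hcomp : ∀ t ∈ D, |ψ t| • g (e t) = ψ t * Λ.lagOf (γ t) (Γ.gderiv γ t / ψ t) := by
    intro t ht
    have hpos : 0 < ψ t := by linarith [hlow t]
    simp only [hg]
    rw [gderiv_comp_symm γ e hpos.ne' (hDder t ht), e.symm_apply_apply, abs_of_pos hpos,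
      smul_eq_mul]
  refine ⟨fun s => γ (e.symm s), hγ.comp_symm e ha hb hlip', ?_, ?_, ?_, ?_⟩
  · refine (integrableOn_Icc_iff_integrableOn_Ioo).2 ?_
    refine (integrableOn_congr_set_ae himg).1 ?_
    rw [integrableOn_image_iff_integrableOn_abs_deriv_smul hDm
      (fun t ht => (hDder t ht).hasDerivWithinAt) e.injective.injOn]
    rw [integrableOn_congr_fun hcomp hDm]
    exact (integrableOn_congr_set_ae hDae).2 hInt
  · have : e.symm a = a := by rw [OrderIso.symm_apply_eq, ha]
    simp only [this]
  · have : e.symm b = b := by rw [OrderIso.symm_apply_eq, hb]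
    simp only [this]
  · rw [Λ.action_eq_Ioo hab.le]
    change ∫ t in Ioo a b, g t = _
    rw [← setIntegral_congr_set himg, integral_image_eq_integral_abs_deriv_smul hDm
      (fun t ht => (hDder t ht).hasDerivWithinAt) e.injective.injOn,
      setIntegral_congr_fun hDm hcomp, setIntegral_congr_set hDae]

end TonelliLagrangian

/-! ### The a priori speed bound -/

namespace TonelliLagrangian

open MetricGraph

variable {Γ : MetricGraph}

theorem exists_measurable_speedSet {a b : ℝ} {γ : ℝ → Γ.G} (hγ : ContinuousOn γ (Ioo a b))
    {T : Set ℝ} (hT : MeasurableSet T) (h0 : volume (Ioo a b ∩ Γ.gderiv γ ⁻¹' T) ≠ 0) :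
    ∃ A ⊆ Ioo a b ∩ Γ.gderiv γ ⁻¹' T, MeasurableSet A ∧ 0 < volume.real A := by
  have h1 := (aemeasurable_gderiv hγ).nullMeasurable hT
  have h2 : NullMeasurableSet (Ioo a b ∩ Γ.gderiv γ ⁻¹' T) := by
    rw [inter_comm]
    exact (nullMeasurableSet_restrict measurableSet_Ioo.nullMeasurableSet).1 h1
  obtain ⟨A, hA, hAm, hAe⟩ := h2.exists_measurable_subset_ae_eq
  refine ⟨A, hA, hAm, ?_⟩
  rw [← measure_congr hAe] at h0
  refine ENNReal.toReal_pos h0 ?_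
  exact ((measure_mono (hA.trans inter_subset_left)).trans_lt (by simp)).ne

/-- A minimizer of duration at least `ε` has a priori bounded speed: if it were faster than `K` on a
set of positive measure, then slowing it down there by a factor `2` and speeding it up by a
factor `2` on a set of slow times would decrease the action. -/
theorem exists_speed_bound (Λ : TonelliLagrangian Γ) {ε : ℝ} (hε : 0 < ε) :
    ∃ K : ℝ, 0 ≤ K ∧ ∀ a b : ℝ, ε ≤ b - a → ∀ γ : ℝ → Γ.G, Λ.Minimizer a b γ →
      ∀ᵐ t, t ∈ Ioo a b → |Γ.gderiv γ t| ≤ K := by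
  obtain ⟨M, hM0, hM⟩ := Λ.exists_slow_bound hε
  obtain ⟨C, hC0, hC⟩ := Λ.exists_bound_lagOf (2 * M)
  obtain ⟨D, hD0, hD⟩ := Λ.exists_superlinear_lagOf 0
  -- speeding up by a factor `2` at slow times costs at most `3 / 2 * C` per unit of time,
  -- and twice as much time is spent on it as on slowing down
  obtain ⟨K, hK0, hK⟩ := Λ.exists_slowdown_gain (3 * C + 1)
  refine ⟨max K M, le_max_of_le_left hK0, fun a b hab γ hγ => ?_⟩
  have hab' : a < b := by linarith
  have hcont : ContinuousOn γ (Ioo a b) := (hγ.1.continuousOn hab'.le).mono Ioo_subset_Icc_self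
  by_contra hcon
  have hA0 : volume (Ioo a b ∩ Γ.gderiv γ ⁻¹' {v | max K M < |v|}) ≠ 0 := by
    intro h
    apply hcon
    filter_upwards [measure_eq_zero_iff_ae_notMem.1 h] with t ht hmem
    by_contra hle
    exact ht ⟨hmem, not_le.1 hle⟩
  obtain ⟨A₀, hA₀, hA₀m, hA₀p⟩ := exists_measurable_speedSet hcont
    (measurableSet_lt measurable_const measurable_norm) hA0
  obtain ⟨S₀, hS₀, hS₀m, hS₀p⟩ := exists_measurable_speedSet (T := {v | |v| ≤ M}) hcont
    (measurableSet_le measurable_norm measurable_const) (hM a b hab γ hγ)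
  set m := min (volume.real A₀) (volume.real S₀ / 2) with hm
  have hmpos : 0 < m := lt_min hA₀p (by linarith)
  obtain ⟨A, hA, hAm, hAv⟩ := exists_measurable_subset_measure_eq hab'.le hA₀m
    (hA₀.trans inter_subset_left) hmpos.le (min_le_left _ _)
  obtain ⟨S, hS, hSm, hSv⟩ := exists_measurable_subset_measure_eq (m := 2 * m) hab'.le hS₀m
    (hS₀.trans inter_subset_left) (by positivity)
    (by linarith [min_le_right (volume.real A₀) (volume.real S₀ / 2)])
  have hAI : A ⊆ Ioo a b := fun t ht => (hA₀ (hA ht)).1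
  have hSI : S ⊆ Ioo a b := fun t ht => (hS₀ (hS ht)).1
  have hfast : ∀ t ∈ A, max K M < |Γ.gderiv γ t| := fun t ht => (hA₀ (hA ht)).2
  have hslow : ∀ t ∈ S, |Γ.gderiv γ t| ≤ M := fun t ht => (hS₀ (hS ht)).2
  have hdisj : ∀ t ∈ A, t ∉ S := fun t ht hs =>
    absurd (hfast t ht) (not_lt.2 ((hslow t hs).trans (le_max_right _ _)))
  set ψ : ℝ → ℝ := fun t => 1 + (A.indicator (fun _ => (1 : ℝ)) t
    + S.indicator (fun _ => (-1 / 2 : ℝ)) t) with hψ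
  have hψm : Measurable ψ :=
    measurable_const.add ((measurable_const.indicator hAm).add (measurable_const.indicator hSm))
  have hψA : ∀ t ∈ A, ψ t = 2 := fun t ht => by
    simp only [hψ, indicator_of_mem ht, indicator_of_notMem (hdisj t ht)]; norm_num
  have hψS : ∀ t ∈ S, ψ t = 1 / 2 := fun t ht => by
    have : t ∉ A := fun h => hdisj t h ht
    simp only [hψ, indicator_of_mem ht, indicator_of_notMem this]; norm_num
  have hψn : ∀ t, t ∉ A → t ∉ S → ψ t = 1 := fun t h h' => by
    simp only [hψ, indicator_of_notMem h, indicator_of_notMem h']; norm_num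
  have hlow : ∀ t, 1 / 2 ≤ ψ t := by
    intro t
    by_cases h : t ∈ A
    · rw [hψA t h]; norm_num
    · by_cases h' : t ∈ S
      · rw [hψS t h']
      · rw [hψn t h h']; norm_num
  have hup : ∀ t, ψ t ≤ 2 := by
    intro t
    by_cases h : t ∈ A
    · rw [hψA t h]
    · by_cases h' : t ∈ S
      · rw [hψS t h']; norm_num
      · rw [hψn t h h']; norm_num
  have hfin : IsFiniteMeasure (volume.restrict (Ioo a b)) := inferInstance
  have hvol : volume.real (Ioo a b) = b - a := by simp [Measure.real, hab'.le]
  have hind : ∀ (B : Set ℝ) (c : ℝ), MeasurableSet B → B ⊆ Ioo a b →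
      IntegrableOn (B.indicator fun _ => c) (Ioo a b) ∧
      ∫ t in Ioo a b, B.indicator (fun _ => c) t = volume.real B * c := by
    intro B c hB hBI
    refine ⟨(integrable_const c).indicator hB, ?_⟩
    rw [integral_indicator hB, setIntegral_const, measureReal_restrict_apply hB,
      inter_eq_left.2 hBI, smul_eq_mul]
  have hsum : ∀ (f : ℝ → ℝ) (c d : ℝ), IntegrableOn f (Ioo a b) →
      IntegrableOn (fun t => f t + (A.indicator (fun _ => c) t + S.indicator (fun _ => d) t))
        (Ioo a b) ∧
      ∫ t in Ioo a b, (f t + (A.indicator (fun _ => c) t + S.indicator (fun _ => d) t)) =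
        (∫ t in Ioo a b, f t) + (m * c + 2 * m * d) := by
    intro f c d hf
    obtain ⟨i1, v1⟩ := hind A c hAm hAI
    obtain ⟨i2, v2⟩ := hind S d hSm hSI
    have i3 : IntegrableOn (fun t => A.indicator (fun _ => c) t + S.indicator (fun _ => d) t)
      (Ioo a b) := i1.add i2
    refine ⟨hf.add i3, ?_⟩
    rw [integral_add hf i3, integral_add i1 i2, v1, v2, hAv, hSv]
  have htot : ∫ t in a..b, ψ t = b - a := by
    rw [intervalIntegral.integral_of_le hab'.le, integral_Ioc_eq_integral_Ioo]
    rw [hψ, (hsum _ _ _ (integrable_const (1 : ℝ))).2, setIntegral_const, hvol, smul_eq_mul]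
    ring
  have hF : IntegrableOn (fun t => Λ.lagOf (γ t) (Γ.gderiv γ t)) (Ioo a b) :=
    (integrableOn_Icc_iff_integrableOn_Ioo).1 hγ.2.1
  have hcost : ∀ t ∈ S, ψ t * Λ.lagOf (γ t) (Γ.gderiv γ t / ψ t) ≤
      Λ.lagOf (γ t) (Γ.gderiv γ t) + 3 / 2 * C ∧
      |ψ t * Λ.lagOf (γ t) (Γ.gderiv γ t / ψ t)| ≤ C := by
    intro t ht
    have hv := hslow t ht
    have h1 := hC (γ t) (Γ.gderiv γ t) (by linarith)
    have h2 := hC (γ t) (Γ.gderiv γ t / ψ t) (by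
      rw [hψS t ht, abs_div, abs_of_pos (by norm_num : (0 : ℝ) < 1 / 2)]; linarith)
    rw [abs_le] at h1 h2
    rw [hψS t ht] at h2 ⊢
    refine ⟨by linarith, ?_⟩
    rw [abs_le]
    constructor <;> linarith
  have hgain : ∀ t ∈ A, ψ t * Λ.lagOf (γ t) (Γ.gderiv γ t / ψ t) ≤
      Λ.lagOf (γ t) (Γ.gderiv γ t) - (3 * C + 1) := by
    intro t ht
    have := hK (γ t) (Γ.gderiv γ t) ((le_max_left _ _).trans_lt (hfast t ht))
    rw [hψA t ht]
    linarith
  have hΦ : IntegrableOn (fun t => ψ t * Λ.lagOf (γ t) (Γ.gderiv γ t / ψ t)) (Ioo a b) := by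
    refine Integrable.mono' (hF.abs.add (integrable_const (C + 2 * D))) ?_ ?_
    · exact (hψm.aemeasurable.mul (Λ.aemeasurable_lagOf hcont hψm)).aestronglyMeasurable
    · refine Eventually.of_forall fun t => ?_
      rw [Real.norm_eq_abs, Pi.add_apply]
      by_cases h : t ∈ A
      · have h1 := hgain t h
        have h2 := hD (γ t) (Γ.gderiv γ t / ψ t)
        rw [hψA t h] at h1 h2 ⊢
        rw [abs_le]
        have h3 := le_abs_self (Λ.lagOf (γ t) (Γ.gderiv γ t))
        have h4 := abs_nonneg (Λ.lagOf (γ t) (Γ.gderiv γ t))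
        constructor <;> linarith
      · by_cases h' : t ∈ S
        · have h1 := (hcost t h').2
          have h4 := abs_nonneg (Λ.lagOf (γ t) (Γ.gderiv γ t))
          linarith
        · rw [hψn t h h', div_one, one_mul]
          linarith
  obtain ⟨α, hα, hαi, hαa, hαb, hαact⟩ :=
    Λ.exists_reparam hab' hγ.1 hψm hlow hup htot hΦ
  have hmin := hγ.2.2 α hα hαi hαa hαb
  rw [hαact, Λ.action_eq_Ioo hab'.le] at hmin
  obtain ⟨hi, hv⟩ := hsum _ (-(3 * C + 1)) (3 / 2 * C) hF
  have hle := integral_mono hΦ hi (fun t => by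
    by_cases h : t ∈ A
    · simp only [indicator_of_mem h, indicator_of_notMem (hdisj t h)]
      linarith [hgain t h]
    · by_cases h' : t ∈ S
      · simp only [indicator_of_mem h', indicator_of_notMem h]
        linarith [(hcost t h').1]
      · simp [indicator_of_notMem h', indicator_of_notMem h, hψn t h h'])
  rw [hv] at hle
  nlinarith

end TonelliLagrangian

/-! ### From the speed bound to the Lipschitz bound -/

namespace MetricGraph

variable {Γ : MetricGraph}

/-- Near an interior point of an edge, the distance is additive along the edge: almost shortest paths
stay in the edge, hence pass through the intermediate points. -/
theorem dist_additive {j : Γ.E} {x₀ : Γ.G} {η : ℝ} (hball : Metric.ball x₀ η ⊆ Γ.edgeInt j)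
    {x y z : Γ.G} (hx : x ∈ Metric.ball x₀ (η / 4)) (hz : z ∈ Metric.ball x₀ (η / 4))
    (hy : y ∈ Γ.edgeInt j) (hxy : Γ.coord j x ≤ Γ.coord j y) (hyz : Γ.coord j y ≤ Γ.coord j z) :
    dist x y + dist y z ≤ dist x z := by
  have hη : dist x z < η / 2 := by
    have := dist_triangle_right x z x₀
    rw [Metric.mem_ball] at hx hz
    linarith
  refine le_of_forall_gt_imp_ge_of_dense fun r hr => ?_
  have hlt : dist x z < min r (η / 2) := lt_min hr hη
  rw [Γ.path_dist x z] at hlt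
  obtain ⟨T, hTmem, hT⟩ := exists_lt_of_csInf_lt (Γ.path_exists x z) hlt
  obtain ⟨hT0, c, hc0, hcT, hL⟩ := hTmem
  have hin : ∀ t ∈ Icc 0 T, c t ∈ Γ.edgeInt j := by
    intro t ht
    apply hball
    have h1 := hL.dist_le_mul t ht 0 ⟨le_rfl, hT0⟩
    rw [NNReal.coe_one, one_mul, Real.dist_eq, sub_zero, abs_of_nonneg ht.1, hc0] at h1
    rw [Metric.mem_ball] at hx ⊢
    have h2 := hT.trans_le (min_le_right _ _)
    linarith [dist_triangle (c t) x x₀, ht.2]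
  have hcont : ContinuousOn (fun t => Γ.coord j (c t)) (Icc 0 T) :=
    (continuousOn_coord_edgeInt j).comp hL.continuousOn hin
  obtain ⟨t, ht, hty⟩ := intermediate_value_Icc hT0 hcont (show Γ.coord j y ∈ Icc _ _ by
    simp only [hc0, hcT]
    exact ⟨hxy, hyz⟩)
  have hcy : c t = y := by
    rw [← (coord_mem (hin t ht)).2, ← (coord_mem hy).2]
    exact congrArg _ hty
  have h1 := hL.dist_le_mul 0 ⟨le_rfl, hT0⟩ t ht
  have h2 := hL.dist_le_mul t ht T ⟨hT0, le_rfl⟩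
  rw [NNReal.coe_one, one_mul, dist_comm (0 : ℝ), Real.dist_eq, sub_zero, abs_of_nonneg ht.1, hc0,
    hcy] at h1
  rw [NNReal.coe_one, one_mul, dist_comm t, Real.dist_eq, abs_of_nonneg (sub_nonneg.2 ht.2), hcT,
    hcy] at h2
  have h3 := hT.trans_le (min_le_left _ _)
  linarith

/-- Near an interior point of an edge, the distance to a suitable point `p` is an isometric coordinate,
and the given edge coordinate is a monotone function of it. -/
theorem exists_local_chart {j : Γ.E} {x₀ : Γ.G} (hx₀ : x₀ ∈ Γ.edgeInt j) :
    ∃ U : Set Γ.G, IsOpen U ∧ x₀ ∈ U ∧ U ⊆ Γ.edgeInt j ∧ ∃ (p : Γ.G) (g : ℝ → ℝ), Monotone g ∧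
      (∀ x ∈ U, ∀ y ∈ U, dist x y = |dist x p - dist y p|) ∧
      ∀ x ∈ U, Γ.coord j x = g (dist x p) := by
  obtain ⟨η, hη, hball⟩ := Metric.isOpen_iff.1 (isOpen_edgeInt j) x₀ hx₀
  obtain ⟨hs₀, hσ⟩ := coord_mem hx₀
  set s₀ := Γ.coord j x₀ with hs₀def
  obtain ⟨δ, hδ, hδ'⟩ := exists_between (lt_min (show 0 < η / 4 by positivity) hs₀.1)
  have hδ1 : δ < η / 4 := hδ'.trans_le (min_le_left _ _)
  have hδ2 : δ < s₀ := hδ'.trans_le (min_le_right _ _)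
  have hpI : s₀ - δ ∈ Icc 0 (Γ.len j) := ⟨by linarith, by linarith [hs₀.2]⟩
  set p := Γ.σ j (s₀ - δ) with hp
  have hpball : p ∈ Metric.ball x₀ (η / 4) := by
    rw [Metric.mem_ball, ← hσ, hp]
    refine (Γ.σ_lip j _ hpI _ (Ioo_subset_Icc_self hs₀)).trans_lt ?_
    rwa [sub_sub_cancel_left, abs_neg, abs_of_pos hδ]
  have hcp : Γ.coord j p = s₀ - δ := Γ.coord_σ hpI
  let U : Set Γ.G := (Γ.edgeInt j ∩ Γ.coord j ⁻¹' Ioi (s₀ - δ)) ∩ Metric.ball x₀ (η / 4)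
  have key : ∀ x ∈ U, ∀ y ∈ U, Γ.coord j x ≤ Γ.coord j y → dist x y = dist y p - dist x p := by
    intro x hx y hy hxy
    have h1 := dist_additive hball hpball hy.2 hx.1.1 (by rw [hcp]; exact le_of_lt hx.1.2) hxy
    have h2 := dist_triangle p x y
    rw [dist_comm y p, dist_comm x p]
    linarith
  have hdist : ∀ x ∈ U, ∀ y ∈ U, dist x y = |dist x p - dist y p| := by
    intro x hx y hy
    rcases le_total (Γ.coord j x) (Γ.coord j y) with h | h
    · rw [abs_sub_comm, ← key x hx y hy h, abs_of_nonneg dist_nonneg]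
    · rw [← key y hy x hx h, abs_of_nonneg dist_nonneg, dist_comm]
  have hinj : InjOn (fun x => dist x p) U := by
    intro x hx y hy hxy
    rw [← dist_eq_zero, hdist x hx y hy]
    simp only at hxy
    rw [hxy, sub_self, abs_zero]
  have hne : Nonempty Γ.G := ⟨x₀⟩
  let W : Set ℝ := (fun x => dist x p) '' U
  let f : ℝ → ℝ := fun r => Γ.coord j (Function.invFunOn (fun x => dist x p) U r)
  have hf : ∀ x ∈ U, f (dist x p) = Γ.coord j x := by
    intro x hx
    exact congrArg (Γ.coord j) (hinj.leftInvOn_invFunOn hx)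
  have hmono : MonotoneOn f W := by
    rintro _ ⟨x, hx, rfl⟩ _ ⟨y, hy, rfl⟩ hxy
    simp only at hxy ⊢
    rw [hf x hx, hf y hy]
    by_contra hlt
    push Not at hlt
    have h := key y hy x hx hlt.le
    have h0 : dist y x = 0 := le_antisymm (by linarith) dist_nonneg
    rw [dist_eq_zero] at h0
    rw [h0] at hlt
    exact lt_irrefl _ hlt
  have hval : ∀ r ∈ f '' W, r ∈ Icc 0 (Γ.len j) := by
    rintro _ ⟨_, ⟨x, hx, rfl⟩, rfl⟩
    simp only
    rw [hf x hx]
    exact Ioo_subset_Icc_self (coord_mem hx.1.1).1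
  obtain ⟨g, hg, hfg⟩ := hmono.exists_monotone_extension ⟨0, fun r hr => (hval r hr).1⟩
    ⟨Γ.len j, fun r hr => (hval r hr).2⟩
  refine ⟨U, ?_, ?_, fun x hx => hx.1.1, p, g, hg, hdist, fun x hx => ?_⟩
  · exact ((continuousOn_coord_edgeInt j).isOpen_inter_preimage (isOpen_edgeInt j) isOpen_Ioi).inter
      Metric.isOpen_ball
  · exact ⟨⟨hx₀, by simp only [mem_preimage, mem_Ioi, ← hs₀def]; linarith⟩,
      Metric.mem_ball_self (by positivity)⟩
  · rw [← hf x hx]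
    exact hfg ⟨x, hx, rfl⟩

/-- The metric speed of `γ` at time `t` is at most `K`. -/
def SpeedLE (Γ : MetricGraph) (γ : ℝ → Γ.G) (K t : ℝ) : Prop :=
  ∀ c > 0, ∀ᶠ s in nhds t, dist (γ s) (γ t) ≤ (K + c) * |s - t|

theorem eventually_abs_sub_le {f : ℝ → ℝ} {v t : ℝ} (h : HasDerivAt f v t) {c : ℝ} (hc : 0 < c) :
    ∀ᶠ s in nhds t, |f s - f t| ≤ (|v| + c) * |s - t| := by
  filter_upwards [h.isLittleO.def hc] with s hs
  simp only [Real.norm_eq_abs, smul_eq_mul] at hs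
  calc |f s - f t| = |(f s - f t - (s - t) * v) + (s - t) * v| := by ring_nf
    _ ≤ |f s - f t - (s - t) * v| + |(s - t) * v| := abs_add_le _ _
    _ ≤ c * |s - t| + |s - t| * |v| := by rw [abs_mul]; linarith
    _ = _ := by ring

theorem HasGDerivAt.speedLE {γ : ℝ → Γ.G} {t v K : ℝ} (h : Γ.HasGDerivAt γ t v)
    (hv : γ t ∉ Γ.vertexSet) (hK : |v| ≤ K) : Γ.SpeedLE γ K t := by
  rcases h with ⟨h, -⟩ | ⟨-, j, f, h1, h2, h3⟩
  · exact (hv h).elim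
  · intro c hc
    filter_upwards [h1, h2, eventually_abs_sub_le h3 hc] with s e1 e2 e3
    rw [← e1, ← h1.self_of_nhds]
    refine (Γ.σ_lip j _ e2 _ h2.self_of_nhds).trans (e3.trans ?_)
    gcongr

/-- Almost everywhere away from the vertices, an absolutely continuous curve has an edge velocity or
metric speed `0`. The second alternative is needed because the inverse of `σ j` is not assumed to be
Lipschitz, so the edge coordinate of the curve need not be absolutely continuous. -/
theorem AbsContOn.ae_hasGDerivAt {a b : ℝ} {γ : ℝ → Γ.G} (hγ : Γ.AbsContOn a b γ) (hab : a ≤ b) :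
    ∀ᵐ t, t ∈ Ioo a b → γ t ∉ Γ.vertexSet →
      (∃ v, Γ.HasGDerivAt γ t v) ∨ Γ.SpeedLE γ 0 t := by
  have hcont : ContinuousOn γ (Ioo a b) := (hγ.continuousOn hab).mono Ioo_subset_Icc_self
  rw [ae_iff]
  refine measure_null_of_locally_null _ fun t₀ ht₀ => ?_
  simp only [mem_ofPred_eq, Classical.not_imp] at ht₀
  obtain ⟨ht₀I, hv₀, -⟩ := ht₀
  obtain ⟨j, hj⟩ := exists_mem_edgeInt hv₀
  obtain ⟨U, hUo, hxU, hUj, p, g, hg, hdist, hcoord⟩ := exists_local_chart hj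
  have hO : IsOpen (Ioo a b ∩ γ ⁻¹' U) := hcont.isOpen_inter_preimage isOpen_Ioo hUo
  refine ⟨_, inter_mem_nhdsWithin _ (hO.mem_nhds ⟨ht₀I, hxU⟩), ?_⟩
  have hAC := hγ.comp_lipschitz hab (LipschitzWith.dist_left p)
  have hdiff := hAC.ae_differentiableAt
  have hZ := ae_deriv_eq_zero_of_mem_null (fun t => dist (γ t) p)
    (Z := {r | ¬ DifferentiableAt ℝ g r}) hg.ae_differentiableAt
  have hae : ∀ᵐ t, t ∉ {t | ¬ (t ∈ Ioo a b → γ t ∉ Γ.vertexSet →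
      (∃ v, Γ.HasGDerivAt γ t v) ∨ Γ.SpeedLE γ 0 t)} ∩ (Ioo a b ∩ γ ⁻¹' U) := by
    filter_upwards [hdiff, hZ] with t e1 e2
    rintro ⟨hbad, htI, htU⟩
    apply hbad
    intro _ _
    have hd : DifferentiableAt ℝ (fun t => dist (γ t) p) t :=
      e1 (by rw [uIcc_of_le hab]; exact Ioo_subset_Icc_self htI)
    have hev : ∀ᶠ s in nhds t, γ s ∈ U := by
      filter_upwards [hO.mem_nhds ⟨htI, htU⟩] with s hs using hs.2
    by_cases hgd : DifferentiableAt ℝ g (dist (γ t) p)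
    · left
      have h1 : HasDerivAt (fun s => g (dist (γ s) p)) _ t :=
        HasDerivAt.comp t hgd.hasDerivAt hd.hasDerivAt
      refine ⟨_, hasGDerivAt_of_coord (hcont.continuousAt (isOpen_Ioo.mem_nhds htI)) (hUj htU)
        (h1.congr_of_eventuallyEq ?_)⟩
      filter_upwards [hev] with s hs using hcoord _ hs
    · right
      have h0 : deriv (fun t => dist (γ t) p) t = 0 := e2 hd hgd
      have h1 := hd.hasDerivAt
      rw [h0] at h1
      intro c hc
      filter_upwards [hev, eventually_abs_sub_le h1 hc] with s hs hs'
      rw [hdist _ hs _ htU]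
      simpa using hs'
  exact measure_eq_zero_iff_ae_notMem.2 hae

/-- An absolutely continuous curve with edge velocity at most `K` almost everywhere is `K`-Lipschitz:
this follows by integrating the derivative of the distance to a point of the curve. -/
theorem AbsContOn.lipschitzOnWith {a b : ℝ} {γ : ℝ → Γ.G} (hγ : Γ.AbsContOn a b γ) (hab : a ≤ b)
    {K : ℝ} (hK : 0 ≤ K) (hspeed : ∀ᵐ t, t ∈ Ioo a b → |Γ.gderiv γ t| ≤ K) :
    LipschitzOnWith K.toNNReal γ (Icc a b) := by
  have hP : ∀ᵐ t, t ∈ Ioo a b → γ t ∉ Γ.vertexSet → Γ.SpeedLE γ K t := by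
    filter_upwards [hγ.ae_hasGDerivAt hab, hspeed] with t e1 e2 ht hv
    rcases e1 ht hv with ⟨v, h⟩ | h
    · refine h.speedLE hv ?_
      rw [← h.gderiv_eq]
      exact e2 ht
    · intro c hc
      filter_upwards [h c hc] with s hs
      refine hs.trans ?_
      gcongr
  have key : ∀ s ∈ Icc a b, ∀ t ∈ Icc a b, s ≤ t → dist (γ t) (γ s) ≤ K * (t - s) := by
    intro s hs t ht hst
    have hAC := hγ.comp_lipschitz hab (LipschitzWith.dist_left (γ s))
    have hAC' : AbsolutelyContinuousOnInterval (fun r => dist (γ r) (γ s)) s t :=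
      hAC.mono (by rw [uIcc_of_le hab, uIcc_of_le hst]; exact Icc_subset_Icc hs.1 ht.2)
    have hvert := ae_deriv_eq_zero_of_mem_null (fun r => dist (γ r) (γ s))
      (Z := (fun x => dist x (γ s)) '' Γ.vertexSet) ((Γ.finite_vertexSet.image _).measure_zero _)
    have hne : ∀ᵐ r : ℝ, r ≠ b := by simp [ae_iff]
    have hb : ∀ᵐ r, r ∈ uIoc s t → ‖deriv (fun r => dist (γ r) (γ s)) r‖ ≤ K := by
      filter_upwards [hAC.ae_differentiableAt, hvert, hP, hne] with r e1 e2 e3 e4 hr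
      rw [uIoc_of_le hst] at hr
      have hrI : r ∈ Ioo a b :=
        ⟨hs.1.trans_lt hr.1, lt_of_le_of_ne (hr.2.trans ht.2) e4⟩
      have hd := e1 (by rw [uIcc_of_le hab]; exact Ioo_subset_Icc_self hrI)
      by_cases hv : γ r ∈ Γ.vertexSet
      · rw [e2 hd ⟨γ r, hv, rfl⟩, norm_zero]
        exact hK
      · refine le_of_forall_pos_le_add fun c hc => ?_
        refine hd.hasDerivAt.le_of_lip' (by positivity) ?_
        filter_upwards [e3 hrI hv c hc] with q hq
        rw [Real.norm_eq_abs, Real.norm_eq_abs]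
        exact (abs_dist_sub_le _ _ _).trans hq
    have h1 := intervalIntegral.norm_integral_le_of_norm_le_const_ae hb
    rw [hAC'.integral_deriv_eq_sub, dist_self, sub_zero, Real.norm_eq_abs,
      abs_of_nonneg dist_nonneg, abs_of_nonneg (sub_nonneg.2 hst)] at h1
    exact h1
  refine LipschitzOnWith.of_dist_le_mul fun s hs t ht => ?_
  rw [Real.coe_toNNReal _ hK, Real.dist_eq]
  rcases le_total s t with h | h
  · rw [abs_sub_comm, abs_of_nonneg (sub_nonneg.2 h), dist_comm]
    exact key s hs t ht h
  · rw [abs_of_nonneg (sub_nonneg.2 h)]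
    exact key t ht s hs h

end MetricGraph

/-- a priori Lipschitz bounds for minimizers. -/
theorem minimizers_uniformly_lipschitz
    (Γ : MetricGraph) (Λ : TonelliLagrangian Γ) (ε : ℝ) (hε : 0 < ε) :
    ∃ K : NNReal, ∀ a b : ℝ, ε ≤ b - a → ∀ γ : ℝ → Γ.G,
      Λ.Minimizer a b γ → LipschitzOnWith K γ (Set.Icc a b) := by
  obtain ⟨K, hK0, hK⟩ := Λ.exists_speed_bound hε
  exact ⟨K.toNNReal, fun a b hab γ hγ =>
    hγ.1.lipschitzOnWith (by linarith) hK0 (hK a b hab γ hγ)⟩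
end
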